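/- arXiv:0907.1116 — 3 statements merged into one kernel-verified Lean document; each statement's English description precedes it below -/
import Mathlib

section
/- Let q ≥ 2 be an integer, 0 < H < 1 − 1/(2q), let c_{1,q,H} > 0 be the constant for which Z_n := V_n/(c_{1,q,H} √n) converges in law to N(0,1), and let N be a standard normal random variable. Then for every c > 0, (cε)² · Σ_{n≥1} [ P(|Z_n| > c ε √n) − P(|N| > c ε √n) ] converges to 0 as ε → 0⁺. -/
open MeasureTheory ProbabilityTheory Filter Real Topology

/-- A (centered) fractional Brownian motion with Hurst parameter `H`:
all finite-dimensional distributions are centered Gaussian (equivalently, every finite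
linear combination of values of the process is a centered real Gaussian), with covariance
`E (B s * B t) = (s^(2H) + t^(2H) - |t-s|^(2H)) / 2` for nonnegative times. -/
structure IsFractionalBrownianMotion {Ω : Type*} [MeasureSpace Ω]
    (B : ℝ → Ω → ℝ) (H : ℝ) : Prop where
  measurable : ∀ t : ℝ, Measurable (B t)
  gaussian_fdd : ∀ (n : ℕ) (t : Fin n → ℝ), (∀ i, 0 ≤ t i) → ∀ c : Fin n → ℝ,
    ∃ v : NNReal,
      Measure.map (fun ω => ∑ i, c i * B (t i) ω) (ℙ : Measure Ω) = gaussianReal 0 v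
  covariance : ∀ s t : ℝ, 0 ≤ s → 0 ≤ t →
    ∫ ω, B s ω * B t ω ∂(ℙ : Measure Ω)
      = (s ^ (2 * H) + t ^ (2 * H) - |t - s| ^ (2 * H)) / 2

/-- `V_n = ∑_{k=0}^{n-1} H_q (n^H (B_{(k+1)/n} - B_{k/n}))`, where `H_q` is the Hermite
polynomial of degree `q`. -/
noncomputable def hermiteVariation {Ω : Type*} [MeasureSpace Ω]
    (B : ℝ → Ω → ℝ) (H : ℝ) (q n : ℕ) (ω : Ω) : ℝ :=
  ∑ k ∈ Finset.range n,
    Polynomial.aeval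
      ((n : ℝ) ^ H * (B (((k : ℝ) + 1) / n) ω - B ((k : ℝ) / n) ω))
      (Polynomial.hermite q)

/-- Convergence in distribution of a sequence of real random variables to a law `μ`. -/
def TendstoInDistribution {Ω : Type*} [MeasureSpace Ω]
    (Z : ℕ → Ω → ℝ) (μ : Measure ℝ) : Prop :=
  ∀ f : BoundedContinuousFunction ℝ ℝ,
    Tendsto (fun n => ∫ ω, f (Z n ω) ∂(ℙ : Measure Ω)) atTop (𝓝 (∫ x, f x ∂μ))


/-- all polynomial moments are finite -/
def AllLp {Ω : Type*} [MeasurableSpace Ω] (P : Measure Ω) (f : Ω → ℝ) : Prop :=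
  ∀ n : ℕ, MemLp f n P

namespace AllLp
variable {Ω : Type*} [MeasurableSpace Ω] {P : Measure Ω} {f g : Ω → ℝ}

lemma add (hf : AllLp P f) (hg : AllLp P g) : AllLp P (fun ω => f ω + g ω) :=
  fun n => (hf n).add (hg n)

lemma const_mul (c : ℝ) (hf : AllLp P f) : AllLp P (fun ω => c * f ω) :=
  fun n => (hf n).const_mul c

lemma const [IsFiniteMeasure P] (c : ℝ) : AllLp P (fun _ => c) := fun _ => memLp_const c

lemma mul (hf : AllLp P f) (hg : AllLp P g) : AllLp P (fun ω => f ω * g ω) := by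
  intro n
  have : ENNReal.HolderTriple ((2 * n : ℕ) : ENNReal) ((2 * n : ℕ) : ENNReal) n := by
    constructor
    push_cast
    rcases Nat.eq_zero_or_pos n with rfl | hn
    · simp
    · rw [ENNReal.mul_inv (by simp) (by simp), ← add_mul, ENNReal.inv_two_add_inv_two, one_mul]
  exact (hg (2 * n)).mul (hf (2 * n))

lemma pow [IsFiniteMeasure P] (hf : AllLp P f) (k : ℕ) : AllLp P (fun ω => f ω ^ k) := by
  induction k with
  | zero => simpa using const 1
  | succ k ih => simpa [pow_succ] using ih.mul hf

lemma sum {ι : Type*} (s : Finset ι) {F : ι → Ω → ℝ} (h : ∀ i ∈ s, AllLp P (F i)) :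
    AllLp P (fun ω => ∑ i ∈ s, F i ω) := fun n => memLp_finsetSum s (fun i hi => h i hi n)

lemma aeval [IsFiniteMeasure P] {R : Type*} [CommSemiring R] [Algebra R ℝ] (hf : AllLp P f) (p : Polynomial R) :
    AllLp P (fun ω => Polynomial.aeval (f ω) p) := by
  simp_rw [Polynomial.aeval_eq_sum_range, Algebra.smul_def]
  exact sum _ fun i _ => (hf.pow i).const_mul _

lemma eval [IsFiniteMeasure P] (hf : AllLp P f) (p : Polynomial ℝ) :
    AllLp P (fun ω => p.eval (f ω)) := by
  simpa using hf.aeval p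

lemma integrable (hf : AllLp P f) : Integrable f P := by
  have := hf 1
  rw [Nat.cast_one] at this
  exact memLp_one_iff_integrable.1 this

lemma of_gaussian (h : HasGaussianLaw f P) : AllLp P f := fun n => h.memLp (by simp)

end AllLp

lemma allLp_id_gaussian (v : NNReal) : AllLp (gaussianReal 0 v) (fun x => x) :=
  AllLp.of_gaussian (IsGaussian.hasGaussianLaw_id (μ := gaussianReal 0 v))

lemma stein_one (p : Polynomial ℝ) :
    ∫ x, x * p.eval x ∂(gaussianReal 0 1) = ∫ x, p.derivative.eval x ∂(gaussianReal 0 1) := by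
  have hinteg : ∀ r : Polynomial ℝ, Integrable (fun x => gaussianPDFReal 0 1 x * r.eval x) := by
    intro r
    have h := ((allLp_id_gaussian 1).eval r).integrable
    rw [gaussianReal_of_var_ne_zero _ one_ne_zero,
      integrable_withDensity_iff_integrable_smul' (measurable_gaussianPDF _ _)
      (ae_of_all _ fun _ ↦ gaussianPDF_lt_top)] at h
    simpa using h
  have hd : ∀ x, HasDerivAt (fun x => gaussianPDFReal 0 1 x * p.eval x)
      (gaussianPDFReal 0 1 x * (p.derivative - Polynomial.X * p).eval x) x := by
    intro x
    have h1 : HasDerivAt (gaussianPDFReal 0 1) (gaussianPDFReal 0 1 x * (-x)) x := by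
      rw [gaussianPDFReal_def]
      have : HasDerivAt (fun x : ℝ => -(x - 0) ^ 2 / (2 * ((1 : NNReal) : ℝ))) (-x) x := by
        have := (((hasDerivAt_id x).sub_const 0).pow 2).neg.div_const (2 * ((1 : NNReal) : ℝ))
        convert! this using 1
        simp
        ring
      convert! (this.exp.const_mul ((√(2 * π * ((1 : NNReal) : ℝ)))⁻¹)) using 1
      ring
    convert! h1.mul (p.hasDerivAt x) using 1
    simp
    ring
  have h0 := integral_eq_zero_of_hasDerivAt_of_integrable hd (hinteg _) (hinteg p)
  rw [integral_gaussianReal_eq_integral_smul one_ne_zero,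
    integral_gaussianReal_eq_integral_smul one_ne_zero]
  simp only [smul_eq_mul]
  have e1 : ∀ x : ℝ, gaussianPDFReal 0 1 x * (x * p.eval x)
      = gaussianPDFReal 0 1 x * (Polynomial.X * p).eval x := by intro x; simp
  simp_rw [e1]
  rw [eq_comm, ← sub_eq_zero, ← integral_sub (hinteg _) (hinteg _)]
  refine Eq.trans ?_ h0
  congr 1; ext x; simp; ring

/-- real Hermite polynomials -/
noncomputable def hermR (n : ℕ) : Polynomial ℝ := (Polynomial.hermite n).map (Int.castRingHom ℝ)

lemma hermR_zero : hermR 0 = 1 := by simp [hermR]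

lemma hermR_succ (n : ℕ) : hermR (n + 1) = Polynomial.X * hermR n - (hermR n).derivative := by
  simp [hermR, Polynomial.hermite_succ, Polynomial.derivative_map]

lemma hermR_derivative (n : ℕ) : (hermR n).derivative = (n : Polynomial ℝ) * hermR (n - 1) := by
  induction n with
  | zero => simp [hermR_zero]
  | succ n ih =>
    rw [hermR_succ, Polynomial.derivative_sub, Polynomial.derivative_mul, ih]
    simp only [Polynomial.derivative_X, Polynomial.derivative_mul, Polynomial.derivative_natCast]
    rcases n with _ | n
    · simp
    · simp only [Nat.add_sub_cancel, zero_mul, zero_add]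
      rw [hermR_succ n]
      push_cast
      ring

lemma stein_herm (a : ℕ) (p : Polynomial ℝ) :
    ∫ x, (hermR (a + 1) * p).eval x ∂(gaussianReal 0 1)
      = ∫ x, (hermR a * p.derivative).eval x ∂(gaussianReal 0 1) := by
  have h := stein_one (hermR a * p)
  have hinteg : ∀ r : Polynomial ℝ, Integrable (fun x => r.eval x) (gaussianReal 0 1) :=
    fun r => ((allLp_id_gaussian 1).eval r).integrable
  have e : ∀ x : ℝ, x * (hermR a * p).eval x = (Polynomial.X * (hermR a * p)).eval x := by
    intro x; simp
  simp_rw [e] at h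
  rw [Polynomial.derivative_mul] at h
  simp only [hermR_succ]
  have e2 : ∀ x : ℝ, ((Polynomial.X * hermR a - (hermR a).derivative) * p).eval x
    = (Polynomial.X * (hermR a * p)).eval x - ((hermR a).derivative * p).eval x := by
    intro x; simp; ring
  simp_rw [e2]
  rw [integral_sub (hinteg _) (hinteg _), h]
  have e3 : ∀ x : ℝ, ((hermR a).derivative * p + hermR a * p.derivative).eval x
    = ((hermR a).derivative * p).eval x + (hermR a * p.derivative).eval x := by
    intro x; simp
  simp_rw [e3]
  rw [integral_add (hinteg _) (hinteg _)]
  ring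

lemma int_three {α : Type*} [MeasurableSpace α] {μ : Measure α} {F G K : α → ℝ}
    (hF : Integrable F μ) (hG : Integrable G μ) (hK : Integrable K μ) {a b c : ℝ} :
    a * ∫ x, F x ∂μ + b * ∫ x, G x ∂μ + c * ∫ x, K x ∂μ
      = ∫ x, (a * F x + b * G x + c * K x) ∂μ := by
  rw [integral_add, integral_add, integral_const_mul, integral_const_mul, integral_const_mul]
  · exact hF.const_mul _
  · exact hG.const_mul _
  · exact (hF.const_mul _).add (hG.const_mul _)
  · exact hK.const_mul _

lemma indep_resid {Ω ι : Type*} [MeasurableSpace Ω] {P : Measure Ω} [IsProbabilityMeasure P]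
    {X : ι → Ω → ℝ} (hX : IsGaussianProcess X P) (hm : ∀ i, ∫ ω, X i ω ∂P = 0)
    (ρ : ι → ι → ℝ) (hρ : ∀ i j, ∫ ω, X i ω * X j ω ∂P = ρ i j) (h1 : ∀ i, ρ i i = 1) (i : ι) :
    IndepFun (X i) (fun ω (m : ι) => X m ω - ρ i m * X i ω) P := by
  classical
  have hG : IsGaussianProcess (Sum.elim (fun (_ : Unit) => X i)
      (fun (m : ι) ω => X m ω - ρ i m * X i ω)) P := by
    refine hX.of_isGaussianProcess ?_
    rintro (u | m)
    · refine ⟨{i}, ContinuousLinearMap.proj ⟨i, by simp⟩, fun ω => ?_⟩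
      simp
    · refine ⟨{i, m}, ContinuousLinearMap.proj ⟨m, by simp⟩
        - (ρ i m) • ContinuousLinearMap.proj ⟨i, by simp⟩, fun ω => ?_⟩
      simp
  have hL : ∀ m, AllLp P (X m) := fun m => AllLp.of_gaussian (hX.hasGaussianLaw_eval m)
  have hI : ∀ m, Integrable (X m) P := fun m => (hL m).integrable
  have hII : ∀ m n, Integrable (fun ω => X m ω * X n ω) P :=
    fun m n => ((hL m).mul (hL n)).integrable
  have h := hG.indepFun_of_covariance_eq_zero (fun _ => hX.aemeasurable i)
    (fun m => (hX.aemeasurable m).sub ((hX.aemeasurable i).const_mul _)) (by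
      intro _ m
      rw [covariance, hm i]
      have e0 : ∫ ω, (X m ω - ρ i m * X i ω) ∂P = 0 := by
        rw [integral_sub (hI m) ((hI i).const_mul _), integral_const_mul, hm, hm]; simp
      rw [e0]
      have : ∀ ω, (X i ω - 0) * (X m ω - ρ i m * X i ω - 0)
          = X i ω * X m ω - ρ i m * (X i ω * X i ω) := by intro ω; ring
      simp_rw [this]
      rw [integral_sub (hII _ _) ((hII _ _).const_mul _), integral_const_mul, hρ, hρ, h1]; simp)
  exact h.comp (φ := fun f : Unit → ℝ => f ()) (ψ := id) (by fun_prop) measurable_id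

open Polynomial in
lemma stein_four {Ω ι : Type*} [MeasurableSpace Ω] {P : Measure Ω} [IsProbabilityMeasure P]
    {X : ι → Ω → ℝ} (hX : IsGaussianProcess X P) (hm : ∀ i, ∫ ω, X i ω ∂P = 0)
    (ρ : ι → ι → ℝ) (hρ : ∀ i j, ∫ ω, X i ω * X j ω ∂P = ρ i j) (h1 : ∀ i, ρ i i = 1)
    (i j k l : ι) (a : ℕ) (f g h : Polynomial ℝ) :
    ∫ ω, (hermR (a + 1)).eval (X i ω) * f.eval (X j ω) * g.eval (X k ω) * h.eval (X l ω) ∂P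
    = ρ i j * ∫ ω, (hermR a).eval (X i ω) * f.derivative.eval (X j ω) * g.eval (X k ω)
          * h.eval (X l ω) ∂P
      + ρ i k * ∫ ω, (hermR a).eval (X i ω) * f.eval (X j ω) * g.derivative.eval (X k ω)
          * h.eval (X l ω) ∂P
      + ρ i l * ∫ ω, (hermR a).eval (X i ω) * f.eval (X j ω) * g.eval (X k ω)
          * h.derivative.eval (X l ω) ∂P := by
  have hL : ∀ m, AllLp P (X m) := fun m => AllLp.of_gaussian (hX.hasGaussianLaw_eval m)
  have hinteg : ∀ p f g h : Polynomial ℝ, Integrable (fun ω => p.eval (X i ω) * f.eval (X j ω)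
      * g.eval (X k ω) * h.eval (X l ω)) P := fun p f g h =>
    (((((hL i).eval p).mul ((hL j).eval f)).mul ((hL k).eval g)).mul ((hL l).eval h)).integrable
  let T : Ω → ℝ × ℝ × ℝ := fun ω => (X j ω - ρ i j * X i ω, X k ω - ρ i k * X i ω,
    X l ω - ρ i l * X i ω)
  have hXm := hX.aemeasurable
  have hTm : AEMeasurable T P := by
    have h1 := hXm i; have h2 := hXm j; have h3 := hXm k; have h4 := hXm l
    fun_prop
  have hind : IndepFun (X i) T P := by
    have := (indep_resid hX hm ρ hρ h1 i).comp (φ := id)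
      (ψ := fun y : ι → ℝ => (y j, y k, y l)) measurable_id (by fun_prop)
    exact this
  have hlaw : P.map (X i) = gaussianReal 0 1 := by
    rw [(hX.hasGaussianLaw_eval i).map_eq_gaussianReal, hm i,
      variance_of_integral_eq_zero (hXm i) (hm i)]
    have : ∫ ω, (X i ^ 2) ω ∂P = 1 := by
      rw [← h1 i, ← hρ i i]; congr 1; ext ω; simp [pow_two]
    simp only [Pi.pow_apply] at this
    rw [this]; simp
  have hmap : P.map (fun ω => (X i ω, T ω)) = (gaussianReal 0 1).prod (P.map T) := by
    rw [(indepFun_iff_map_prod_eq_prod_map_map (hXm i) hTm).1 hind, hlaw]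
  have : IsProbabilityMeasure (P.map T) := Measure.isProbabilityMeasure_map hTm
  -- the transfer
  have key : ∀ p f g h : Polynomial ℝ,
      Integrable (fun z : ℝ × ℝ × ℝ × ℝ => p.eval z.1 * f.eval (ρ i j * z.1 + z.2.1)
        * g.eval (ρ i k * z.1 + z.2.2.1) * h.eval (ρ i l * z.1 + z.2.2.2))
        ((gaussianReal 0 1).prod (P.map T)) ∧
      ∫ ω, p.eval (X i ω) * f.eval (X j ω) * g.eval (X k ω) * h.eval (X l ω) ∂P
      = ∫ y, ∫ x, p.eval x * f.eval (ρ i j * x + y.1)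
        * g.eval (ρ i k * x + y.2.1) * h.eval (ρ i l * x + y.2.2) ∂(gaussianReal 0 1)
          ∂(P.map T) := by
    intro p f g h
    have hc : Continuous (fun z : ℝ × ℝ × ℝ × ℝ => p.eval z.1 * f.eval (ρ i j * z.1 + z.2.1)
        * g.eval (ρ i k * z.1 + z.2.2.1) * h.eval (ρ i l * z.1 + z.2.2.2)) := by
      have hp := p.continuous
      have hf := f.continuous
      have hg := g.continuous
      have hh := h.continuous
      fun_prop
    have hi : Integrable (fun z : ℝ × ℝ × ℝ × ℝ => p.eval z.1 * f.eval (ρ i j * z.1 + z.2.1)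
        * g.eval (ρ i k * z.1 + z.2.2.1) * h.eval (ρ i l * z.1 + z.2.2.2))
        ((gaussianReal 0 1).prod (P.map T)) := by
      rw [← hmap, integrable_map_measure hc.aestronglyMeasurable ((hXm i).prodMk hTm)]
      refine (hinteg p f g h).congr (ae_of_all _ fun ω => ?_)
      simp [T]
    refine ⟨hi, ?_⟩
    rw [← integral_prod_symm _ hi, ← hmap,
      integral_map ((hXm i).prodMk hTm) hc.aestronglyMeasurable]
    congr 1; ext ω; simp [T]
  rw [(key _ f g h).2, (key _ f.derivative g h).2, (key _ f g.derivative h).2,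
    (key _ f g h.derivative).2]
  have kf := (key (hermR a) f.derivative g h).1
  have kg := (key (hermR a) f g.derivative h).1
  have kh := (key (hermR a) f g h.derivative).1
  rw [int_three kf.integral_prod_right kg.integral_prod_right kh.integral_prod_right]
  apply integral_congr_ae
  filter_upwards [kf.prod_left_ae, kg.prod_left_ae, kh.prod_left_ae] with y yf yg yh
  have st := stein_herm a (f.comp (C (ρ i j) * Polynomial.X + C y.1)
    * g.comp (C (ρ i k) * Polynomial.X + C y.2.1)
    * h.comp (C (ρ i l) * Polynomial.X + C y.2.2))
  rw [int_three yf yg yh]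
  refine Eq.trans ?_ (st.trans ?_)
  · congr 1; ext x; simp; ring
  · congr 1; ext x
    simp [Polynomial.derivative_comp]
    ring

/-- A centered Gaussian process with covariance `ρ` and unit variances. -/
structure StdGP {Ω ι : Type*} [MeasurableSpace Ω] (P : Measure Ω) (X : ι → Ω → ℝ)
    (ρ : ι → ι → ℝ) : Prop where
  gp : IsGaussianProcess X P
  mean : ∀ i, ∫ ω, X i ω ∂P = 0
  cov : ∀ i j, ∫ ω, X i ω * X j ω ∂P = ρ i j
  one : ∀ i, ρ i i = 1

/-- four-point function of Hermite polynomials -/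
noncomputable def E4 {Ω ι : Type*} [MeasurableSpace Ω] (P : Measure Ω) (X : ι → Ω → ℝ)
    (i j k l : ι) (a b c d : ℕ) : ℝ :=
  ∫ ω, (hermR a).eval (X i ω) * (hermR b).eval (X j ω) * (hermR c).eval (X k ω)
    * (hermR d).eval (X l ω) ∂P

/-- uniform bound on the four-point functions -/
def Bd {Ω : Type*} (ι : Type*) [MeasurableSpace Ω] (P : Measure Ω) (a b c d : ℕ) : Prop :=
  ∃ K : ℝ, 0 ≤ K ∧ ∀ (X : ι → Ω → ℝ) (ρ : ι → ι → ℝ), StdGP P X ρ → ∀ (i j k l : ι)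
    (s t u v : ℝ), 0 ≤ s → 0 ≤ t → 0 ≤ u → 0 ≤ v →
    |ρ i j| ≤ s * t → |ρ i k| ≤ s * u → |ρ i l| ≤ s * v → |ρ j k| ≤ t * u → |ρ j l| ≤ t * v →
    |ρ k l| ≤ u * v → |E4 P X i j k l a b c d| ≤ K * (s ^ a * t ^ b * u ^ c * v ^ d)

section
variable {Ω ι : Type*} [MeasurableSpace Ω] {P : Measure Ω}

lemma StdGP.symm {X : ι → Ω → ℝ} {ρ : ι → ι → ℝ} (h : StdGP P X ρ) (i j : ι) : ρ i j = ρ j i := by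
  rw [← h.cov, ← h.cov]; simp_rw [mul_comm]

lemma E4_succ [IsProbabilityMeasure P] {X : ι → Ω → ℝ} {ρ : ι → ι → ℝ} (h : StdGP P X ρ)
    (i j k l : ι) (a b c d : ℕ) :
    E4 P X i j k l (a + 1) b c d
    = ρ i j * (b * E4 P X i j k l a (b - 1) c d) + ρ i k * (c * E4 P X i j k l a b (c - 1) d)
      + ρ i l * (d * E4 P X i j k l a b c (d - 1)) := by
  have := stein_four h.gp h.mean ρ h.cov h.one i j k l a (hermR b) (hermR c) (hermR d)
  unfold E4
  rw [this]
  simp only [hermR_derivative, ← integral_const_mul, Polynomial.eval_mul, Polynomial.eval_natCast]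
  congr 1
  · congr 1
    · congr 1; ext ω; ring
    · congr 1; ext ω; ring
  · congr 1; ext ω; ring

lemma term_bound {r s t K F R : ℝ} {b : ℕ} (hs : 0 ≤ s) (ht : 0 ≤ t) (hR : 0 ≤ R) (hr : |r| ≤ s * t)
    (hF : |F| ≤ K * (t ^ (b - 1) * R)) :
    |r * (b * F)| ≤ (b * K) * (s * (t ^ b * R)) := by
  rcases b with _ | b
  · simp
  · rw [abs_mul, abs_mul, Nat.abs_cast]
    simp only [Nat.add_sub_cancel] at hF
    calc |r| * (((b + 1 : ℕ) : ℝ) * |F|)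
        ≤ (s * t) * (((b + 1 : ℕ) : ℝ) * (K * (t ^ b * R))) := by gcongr
      _ = _ := by ring

lemma Bd_succ [IsProbabilityMeasure P] {a b c d : ℕ} (h1 : Bd ι P a (b - 1) c d)
    (h2 : Bd ι P a b (c - 1) d) (h3 : Bd ι P a b c (d - 1)) : Bd ι P (a + 1) b c d := by
  obtain ⟨K1, hK1, B1⟩ := h1
  obtain ⟨K2, hK2, B2⟩ := h2
  obtain ⟨K3, hK3, B3⟩ := h3
  refine ⟨b * K1 + c * K2 + d * K3, by positivity, ?_⟩
  intro X ρ hX i j k l s t u v hs ht hu hv r1 r2 r3 r4 r5 r6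
  rw [E4_succ hX]
  have b1 := B1 X ρ hX i j k l s t u v hs ht hu hv r1 r2 r3 r4 r5 r6
  have b2 := B2 X ρ hX i j k l s t u v hs ht hu hv r1 r2 r3 r4 r5 r6
  have b3 := B3 X ρ hX i j k l s t u v hs ht hu hv r1 r2 r3 r4 r5 r6
  have c1 := term_bound (b := b) (R := s ^ a * u ^ c * v ^ d) hs ht (by positivity) r1
    (b1.trans_eq (by ring))
  have c2 := term_bound (b := c) (R := s ^ a * t ^ b * v ^ d) hs hu (by positivity) r2
    (b2.trans_eq (by ring))
  have c3 := term_bound (b := d) (R := s ^ a * t ^ b * u ^ c) hs hv (by positivity) r3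
    (b3.trans_eq (by ring))
  refine (abs_add_three _ _ _).trans ((add_le_add (add_le_add c1 c2) c3).trans_eq ?_)
  ring

lemma Bd_swap12 {a b c d : ℕ} (h : Bd ι P a b c d) : Bd ι P b a c d := by
  obtain ⟨K, hK, B⟩ := h
  refine ⟨K, hK, ?_⟩
  intro X ρ hX i j k l s t u v hs ht hu hv r1 r2 r3 r4 r5 r6
  have := B X ρ hX j i k l t s u v ht hs hu hv (by rwa [hX.symm, mul_comm]) r4 r5 r2 r3 r6
  calc _ = |E4 P X j i k l a b c d| := by
        unfold E4; congr 2; ext ω; ring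
    _ ≤ _ := this
    _ = _ := by ring

lemma Bd_swap13 {a b c d : ℕ} (h : Bd ι P a b c d) : Bd ι P c b a d := by
  obtain ⟨K, hK, B⟩ := h
  refine ⟨K, hK, ?_⟩
  intro X ρ hX i j k l s t u v hs ht hu hv r1 r2 r3 r4 r5 r6
  have := B X ρ hX k j i l u t s v hu ht hs hv (by rwa [hX.symm, mul_comm])
    (by rwa [hX.symm, mul_comm]) r6 (by rwa [hX.symm, mul_comm]) r5 r3
  calc _ = |E4 P X k j i l a b c d| := by
        unfold E4; congr 2; ext ω; ring
    _ ≤ _ := this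
    _ = _ := by ring

lemma Bd_swap14 {a b c d : ℕ} (h : Bd ι P a b c d) : Bd ι P d b c a := by
  obtain ⟨K, hK, B⟩ := h
  refine ⟨K, hK, ?_⟩
  intro X ρ hX i j k l s t u v hs ht hu hv r1 r2 r3 r4 r5 r6
  have := B X ρ hX l j k i v t u s hv ht hu hs (by rwa [hX.symm, mul_comm])
    (by rwa [hX.symm, mul_comm]) (by rwa [hX.symm, mul_comm]) r4 (by rwa [hX.symm, mul_comm])
    (by rwa [hX.symm, mul_comm])
  calc _ = |E4 P X l j k i a b c d| := by
        unfold E4; congr 2; ext ω; ring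
    _ ≤ _ := this
    _ = _ := by ring

lemma Bd_zero [IsProbabilityMeasure P] : Bd ι P 0 0 0 0 := by
  refine ⟨1, by simp, ?_⟩
  intros
  simp [E4, hermR_zero]

/-- the derivative terms with a zero coefficient do not matter -/
lemma Bd_all [IsProbabilityMeasure P] (n : ℕ) : ∀ a b c d : ℕ, a + b + c + d = n → Bd ι P a b c d := by
  induction n using Nat.strong_induction_on with
  | _ n ih =>
    have main : ∀ a b c d : ℕ, a + 1 + b + c + d = n → Bd ι P (a + 1) b c d := by
      intro a b c d h
      exact Bd_succ (ih _ (by omega) _ _ _ _ rfl) (ih _ (by omega) _ _ _ _ rfl)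
        (ih _ (by omega) _ _ _ _ rfl)
    intro a b c d h
    rcases a with _ | a
    · rcases b with _ | b
      · rcases c with _ | c
        · rcases d with _ | d
          · exact Bd_zero
          · exact Bd_swap14 (main _ _ _ _ (by omega))
        · exact Bd_swap13 (main _ _ _ _ (by omega))
      · exact Bd_swap12 (main _ _ _ _ (by omega))
    · exact main _ _ _ _ h

/-- choice of weights -/
lemma weights_aux {r12 r13 r14 r23 r24 r34 : ℝ} (h12 : 0 < r12) (h13 : 0 < r13) (h14 : 0 < r14)
    (h34 : 0 < r34)
    (m1 : r13 * r24 ≤ r12 * r34) (m2 : r14 * r23 ≤ r12 * r34) :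
    ∃ s t u v : ℝ, 0 < s ∧ 0 < t ∧ 0 < u ∧ 0 < v ∧ r12 ≤ s * t ∧ r13 ≤ s * u ∧ r14 ≤ s * v ∧
      r23 ≤ t * u ∧ r24 ≤ t * v ∧ r34 ≤ u * v ∧ s * t * u * v = r12 * r34 := by
  have hx : 0 < √(r13 * r14 / r34) := by positivity
  set x := √(r13 * r14 / r34) with hxd
  have hx2 : x ^ 2 = r13 * r14 / r34 := Real.sq_sqrt (by positivity)
  -- y = r13 / x
  refine ⟨x, r12 / x, r13 / x, r34 * x / r13, hx, by positivity, by positivity, by positivity,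
    ?_, ?_, ?_, ?_, ?_, ?_, ?_⟩
  · apply le_of_eq; field_simp
  · apply le_of_eq; field_simp
  · apply le_of_eq
    have : x * (r34 * x / r13) = r34 * x ^ 2 / r13 := by ring
    rw [this, hx2]; field_simp
  · have : r12 / x * (r13 / x) = r12 * r13 / x ^ 2 := by field_simp
    rw [this, hx2]
    have : r12 * r13 / (r13 * r14 / r34) = r12 * r34 / r14 := by field_simp
    rw [this, le_div_iff₀ h14]; linarith
  · have : r12 / x * (r34 * x / r13) = r12 * r34 / r13 := by field_simp
    rw [this, le_div_iff₀ h13]; linarith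
  · apply le_of_eq; field_simp
  · field_simp

lemma four_bound [IsProbabilityMeasure P] (q : ℕ) : ∃ K : ℝ, 0 ≤ K ∧
    ∀ (X : ι → Ω → ℝ) (ρ r : ι → ι → ℝ), StdGP P X ρ → (∀ i j, |ρ i j| ≤ r i j) →
    (∀ i j, 0 < r i j) → ∀ i j k l : ι,
    |E4 P X i j k l q q q q| ≤ K * ((r i j * r k l) ^ q + (r i k * r j l) ^ q
      + (r i l * r j k) ^ q) := by
  obtain ⟨K, hK, B⟩ := Bd_all (ι := ι) (P := P) _ q q q q rfl
  refine ⟨K, hK, ?_⟩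
  intro X ρ r hX hr hp i j k l
  have fin : ∀ s t u v : ℝ, 0 < s → 0 < t → 0 < u → 0 < v → r i j ≤ s * t → r i k ≤ s * u →
      r i l ≤ s * v → r j k ≤ t * u → r j l ≤ t * v → r k l ≤ u * v →
      |E4 P X i j k l q q q q| ≤ K * (s * t * u * v) ^ q := by
    intro s t u v hs ht hu hv h1 h2 h3 h4 h5 h6
    have := B X ρ hX i j k l s t u v hs.le ht.le hu.le hv.le ((hr _ _).trans h1)
      ((hr _ _).trans h2) ((hr _ _).trans h3) ((hr _ _).trans h4) ((hr _ _).trans h5)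
      ((hr _ _).trans h6)
    refine this.trans_eq ?_
    rw [mul_pow, mul_pow, mul_pow]
  have pij := hp i j
  have pik := hp i k
  have pil := hp i l
  have pjk := hp j k
  have pjl := hp j l
  have pkl := hp k l
  have A1 : 0 ≤ (r i j * r k l) ^ q := by positivity
  have A2 : 0 ≤ (r i k * r j l) ^ q := by positivity
  have A3 : 0 ≤ (r i l * r j k) ^ q := by positivity
  have cases3 : (r i k * r j l ≤ r i j * r k l ∧ r i l * r j k ≤ r i j * r k l) ∨
      (r i j * r k l ≤ r i k * r j l ∧ r i l * r j k ≤ r i k * r j l) ∨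
      (r i j * r k l ≤ r i l * r j k ∧ r i k * r j l ≤ r i l * r j k) := by
    grind
  rcases cases3 with ⟨m1, m2⟩ | ⟨m1, m2⟩ | ⟨m1, m2⟩
  · obtain ⟨s, t, u, v, hs, ht, hu, hv, h1, h2, h3, h4, h5, h6, h7⟩ :=
      weights_aux pij pik pil pkl m1 m2
    have := fin s t u v hs ht hu hv h1 h2 h3 h4 h5 h6
    rw [h7] at this
    refine this.trans ?_
    gcongr; linarith
  · -- swap j and k
    obtain ⟨s, u, t, v, hs, ht, hu, hv, h1, h2, h3, h4, h5, h6, h7⟩ :=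
      weights_aux (r12 := r i k) (r13 := r i j) (r14 := r i l) (r23 := r j k) (r24 := r k l)
        (r34 := r j l) pik pij pil pjl m1 m2
    have := fin s t u v hs hu ht hv h2 h1 h3 (by linarith [mul_comm t u]) h6 h5
    rw [show s * t * u * v = s * u * t * v by ring, h7] at this
    refine this.trans ?_
    gcongr; linarith
  · -- swap j and l
    obtain ⟨s, v, u, t, hs, hv, hu, ht, h1, h2, h3, h4, h5, h6, h7⟩ :=
      weights_aux (r12 := r i l) (r13 := r i k) (r14 := r i j) (r23 := r k l) (r24 := r j l)
        (r34 := r j k) pil pik pij pjk (by linarith) (by linarith)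
    have := fin s t u v hs ht hu hv h3 h2 h1 (by linarith [mul_comm t u])
      (by linarith [mul_comm t v]) (by linarith [mul_comm u v])
    rw [show s * t * u * v = s * v * u * t by ring, h7] at this
    refine this.trans ?_
    gcongr; linarith

lemma fourth_moment [IsProbabilityMeasure P] (q : ℕ) : ∃ K : ℝ, 0 ≤ K ∧
    ∀ (X : ι → Ω → ℝ) (ρ r : ι → ι → ℝ), StdGP P X ρ → (∀ i j, |ρ i j| ≤ r i j) →
    (∀ i j, 0 < r i j) → ∀ s : Finset ι,
    ∫ ω, (∑ i ∈ s, (hermR q).eval (X i ω)) ^ 4 ∂P ≤ K * (∑ i ∈ s, ∑ j ∈ s, r i j ^ q) ^ 2 := by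
  obtain ⟨K, hK, B⟩ := four_bound (ι := ι) (P := P) q
  refine ⟨3 * K, by positivity, ?_⟩
  intro X ρ r hX hr hp s
  have hL : ∀ m, AllLp P (X m) := fun m => AllLp.of_gaussian (hX.gp.hasGaussianLaw_eval m)
  have e1 : ∀ ω, (∑ i ∈ s, (hermR q).eval (X i ω)) ^ 4
      = ∑ i ∈ s, ∑ j ∈ s, ∑ k ∈ s, ∑ l ∈ s, (hermR q).eval (X i ω) * (hermR q).eval (X j ω)
        * (hermR q).eval (X k ω) * (hermR q).eval (X l ω) := by
    intro ω
    simp only [← Finset.mul_sum, ← Finset.sum_mul]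
    ring
  have hi : ∀ i j k l, Integrable (fun ω => (hermR q).eval (X i ω) * (hermR q).eval (X j ω)
        * (hermR q).eval (X k ω) * (hermR q).eval (X l ω)) P := fun i j k l =>
    (((((hL i).eval _).mul ((hL j).eval _)).mul ((hL k).eval _)).mul ((hL l).eval _)).integrable
  simp_rw [e1]
  have e2 : ∫ ω, ∑ i ∈ s, ∑ j ∈ s, ∑ k ∈ s, ∑ l ∈ s, (hermR q).eval (X i ω)
      * (hermR q).eval (X j ω) * (hermR q).eval (X k ω) * (hermR q).eval (X l ω) ∂P
      = ∑ i ∈ s, ∑ j ∈ s, ∑ k ∈ s, ∑ l ∈ s, E4 P X i j k l q q q q := by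
    rw [integral_finsetSum]
    swap
    · exact fun i _ => integrable_finsetSum _ fun j _ => integrable_finsetSum _ fun k _ =>
        integrable_finsetSum _ fun l _ => hi i j k l
    refine Finset.sum_congr rfl fun i _ => ?_
    rw [integral_finsetSum]
    swap
    · exact fun j _ => integrable_finsetSum _ fun k _ =>
        integrable_finsetSum _ fun l _ => hi i j k l
    refine Finset.sum_congr rfl fun j _ => ?_
    rw [integral_finsetSum]
    swap
    · exact fun k _ => integrable_finsetSum _ fun l _ => hi i j k l
    refine Finset.sum_congr rfl fun k _ => ?_
    rw [integral_finsetSum]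
    · rfl
    · exact fun l _ => hi i j k l
  rw [e2]
  set S := ∑ i ∈ s, ∑ j ∈ s, r i j ^ q with hS
  have f1 : ∑ i ∈ s, ∑ j ∈ s, ∑ k ∈ s, ∑ l ∈ s, (r i j * r k l) ^ q = S ^ 2 := by
    simp only [mul_pow, ← Finset.mul_sum, ← Finset.sum_mul]
    rw [← hS, pow_two]
  have f2 : ∑ i ∈ s, ∑ j ∈ s, ∑ k ∈ s, ∑ l ∈ s, (r i k * r j l) ^ q = S ^ 2 := by
    rw [← f1]
    exact Finset.sum_congr rfl fun i _ => Finset.sum_comm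
  have f3 : ∑ i ∈ s, ∑ j ∈ s, ∑ k ∈ s, ∑ l ∈ s, (r i l * r j k) ^ q = S ^ 2 := by
    rw [← f2]
    refine Finset.sum_congr rfl fun i _ => Finset.sum_congr rfl fun j _ => Finset.sum_comm
  calc _ ≤ ∑ i ∈ s, ∑ j ∈ s, ∑ k ∈ s, ∑ l ∈ s, K * ((r i j * r k l) ^ q + (r i k * r j l) ^ q
      + (r i l * r j k) ^ q) := by
        gcongr with i _ j _ k _ l _
        exact (le_abs_self _).trans (B X ρ r hX hr hp i j k l)
    _ = K * (S ^ 2 + S ^ 2 + S ^ 2) := by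
        simp only [← Finset.mul_sum, Finset.sum_add_distrib]
        rw [f1, f2, f3]
    _ = _ := by ring
end

/-- covariance function of fractional Gaussian noise -/
noncomputable def fgn (H : ℝ) (z : ℤ) : ℝ :=
  (|(z : ℝ) + 1| ^ (2 * H) + |(z : ℝ) - 1| ^ (2 * H) - 2 * |(z : ℝ)| ^ (2 * H)) / 2

lemma second_diff {p x : ℝ} (hp0 : 0 < p) (hp2 : p < 2) (hx : 2 ≤ x) :
    |(x + 1) ^ p + (x - 1) ^ p - 2 * x ^ p| ≤ 2 * (x - 1) ^ (p - 2) := by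
  have hd : ∀ (r y : ℝ), 0 < y → HasDerivAt (fun y : ℝ => y ^ r) (r * y ^ (r - 1)) y :=
    fun r y hy => Real.hasDerivAt_rpow_const (Or.inl hy.ne')
  have hd1 : ∀ (r y : ℝ), 0 < y → HasDerivAt (fun y : ℝ => (y + 1) ^ r) (r * (y + 1) ^ (r - 1)) y :=
    fun r y hy => by
      have := (hd r (y + 1) (by linarith)).comp y ((hasDerivAt_id y).add_const 1)
      simpa [Function.comp_def] using this
  have hg : ∀ y, 0 < y → HasDerivAt (fun y : ℝ => (y + 1) ^ p - y ^ p)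
      (p * (y + 1) ^ (p - 1) - p * y ^ (p - 1)) y := fun y hy => (hd1 p y hy).sub (hd p y hy)
  obtain ⟨ξ, ⟨h1, h2⟩, h3⟩ := exists_hasDerivAt_eq_slope (fun y : ℝ => (y + 1) ^ p - y ^ p)
    (fun y => p * (y + 1) ^ (p - 1) - p * y ^ (p - 1)) (show x - 1 < x by linarith)
    (fun y hy => (hg y (by linarith [hy.1])).continuousAt.continuousWithinAt)
    (fun y hy => hg y (by linarith [hy.1]))
  obtain ⟨η, ⟨k1, k2⟩, k3⟩ := exists_hasDerivAt_eq_slope (fun y : ℝ => y ^ (p - 1))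
    (fun y => (p - 1) * y ^ (p - 1 - 1)) (show ξ < ξ + 1 by linarith)
    (fun y hy => (hd _ y (by linarith [hy.1])).continuousAt.continuousWithinAt)
    (fun y hy => hd _ y (by linarith [hy.1]))
  have e : (x + 1) ^ p + (x - 1) ^ p - 2 * x ^ p = p * (p - 1) * η ^ (p - 2) := by
    rw [show x - (x - 1) = 1 by ring, div_one, show x - 1 + 1 = x by ring] at h3
    rw [show ξ + 1 - ξ = 1 by ring, div_one, show p - 1 - 1 = p - 2 by ring] at k3
    linear_combination p * (-k3) - h3
  rw [e, abs_mul, abs_of_nonneg (Real.rpow_nonneg (show 0 ≤ η by linarith) _)]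
  have : η ^ (p - 2) ≤ (x - 1) ^ (p - 2) :=
    Real.rpow_le_rpow_of_nonpos (by linarith) (by linarith) (by linarith)
  have h4 : |p * (p - 1)| ≤ 2 := by rw [abs_le]; constructor <;> nlinarith
  have h5 : 0 ≤ η ^ (p - 2) := Real.rpow_nonneg (by linarith) _
  nlinarith [abs_nonneg (p * (p - 1))]

/-- positive majorant of `fgn` -/
noncomputable def fgnR (H : ℝ) (m : ℕ) : ℝ := 9 * ((m : ℝ) + 1) ^ (2 * H - 2)

lemma fgnR_pos (H : ℝ) (m : ℕ) : 0 < fgnR H m := by unfold fgnR; positivity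

lemma fgn_le_nat {H : ℝ} (h0 : 0 < H) (h1 : H < 1) (m : ℕ) : |fgn H m| ≤ fgnR H m := by
  unfold fgn fgnR
  have hlow : ∀ x : ℝ, 0 < x → x ≤ 3 → 1 ≤ 9 * x ^ (2 * H - 2) := by
    intro x hx hx3
    have h2 : (3 : ℝ) ^ (-2 : ℝ) ≤ (3 : ℝ) ^ (2 * H - 2) :=
      Real.rpow_le_rpow_of_exponent_le (by norm_num) (by linarith)
    have h3 : (3 : ℝ) ^ (2 * H - 2) ≤ x ^ (2 * H - 2) :=
      Real.rpow_le_rpow_of_nonpos hx hx3 (by linarith)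
    have h4 : (3 : ℝ) ^ (-2 : ℝ) = 1 / 9 := by
      rw [Real.rpow_neg (by norm_num)]; norm_num
    rw [h4] at h2
    linarith
  rcases m with _ | _ | m
  · have := hlow (((0 : ℕ) : ℝ) + 1) (by norm_num) (by norm_num)
    refine le_trans ?_ this
    have h0' : (0 : ℝ) ^ (2 * H) = 0 := Real.zero_rpow (by linarith)
    simp [h0']
  · have := hlow (((0 + 1 : ℕ) : ℝ) + 1) (by norm_num) (by norm_num)
    refine le_trans ?_ this
    have h0' : (0 : ℝ) ^ (2 * H) = 0 := Real.zero_rpow (by linarith)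
    have h5 : (2 : ℝ) ^ (2 * H) ≤ (2 : ℝ) ^ (2 : ℝ) :=
      Real.rpow_le_rpow_of_exponent_le (by norm_num) (by linarith)
    have h6 : (0 : ℝ) ≤ (2 : ℝ) ^ (2 * H) := by positivity
    have h7 : (2 : ℝ) ^ (2 : ℝ) = 4 := by norm_num
    norm_num [h0']
    rw [abs_le]
    constructor <;> linarith
  · push_cast
    have hm : (0 : ℝ) ≤ m := Nat.cast_nonneg m
    have := second_diff (p := 2 * H) (x := m + 1 + 1) (by linarith) (by linarith) (by linarith)
    rw [abs_of_nonneg (by linarith : (0 : ℝ) ≤ (m : ℝ) + 1 + 1 + 1),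
      abs_of_nonneg (by linarith : (0 : ℝ) ≤ (m : ℝ) + 1 + 1 - 1),
      abs_of_nonneg (by linarith : (0 : ℝ) ≤ (m : ℝ) + 1 + 1), abs_div, abs_two]
    have h8 : ((m : ℝ) + 1 + 1 - 1) ^ (2 * H - 2) ≤ 9 * ((m : ℝ) + 1 + 1 + 1) ^ (2 * H - 2) := by
      have h9 : ((m : ℝ) + 1 + 1 - 1) ^ (2 * H - 2)
          ≤ (((m : ℝ) + 1 + 1 + 1) * (1 / 3)) ^ (2 * H - 2) :=
        Real.rpow_le_rpow_of_nonpos (by linarith) (by linarith) (by linarith)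
      rw [Real.mul_rpow (by linarith) (by norm_num)] at h9
      have h10 : ((1 : ℝ) / 3) ^ (2 * H - 2) ≤ 9 := by
        rw [one_div, Real.inv_rpow (by norm_num), ← Real.rpow_neg (by norm_num)]
        calc (3 : ℝ) ^ (-(2 * H - 2)) ≤ (3 : ℝ) ^ (2 : ℝ) :=
              Real.rpow_le_rpow_of_exponent_le (by norm_num) (by linarith)
          _ = 9 := by norm_num
      have h11 : (0 : ℝ) ≤ ((m : ℝ) + 1 + 1 + 1) ^ (2 * H - 2) := by positivity
      nlinarith
    linarith

lemma fgn_le {H : ℝ} (h0 : 0 < H) (h1 : H < 1) (z : ℤ) : |fgn H z| ≤ fgnR H z.natAbs := by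
  obtain ⟨m, rfl | rfl⟩ := z.eq_nat_or_neg
  · simpa using fgn_le_nat h0 h1 m
  · have hsym : fgn H (-(m : ℤ)) = fgn H (m : ℤ) := by
      unfold fgn
      push_cast
      rw [abs_neg, show -(m : ℝ) + 1 = -((m : ℝ) - 1) by ring,
        show -(m : ℝ) - 1 = -((m : ℝ) + 1) by ring, abs_neg, abs_neg]
      ring
    rw [hsym]
    simpa using fgn_le_nat h0 h1 m

lemma fgnR_summable {H : ℝ} {q : ℕ} (hq : 2 ≤ q) (hH1 : H < 1 - 1 / (2 * q)) :
    Summable (fun z : ℤ => fgnR H z.natAbs ^ q) := by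
  have hq0 : (0 : ℝ) < q := by positivity
  have hex : 1 < (2 - 2 * H) * q := by
    have : 1 / (2 * (q : ℝ)) < 1 - H := by linarith
    rw [div_lt_iff₀ (by positivity)] at this
    linarith
  have hnat : Summable (fun m : ℕ => fgnR H m ^ q) := by
    have h1 : Summable (fun m : ℕ => 1 / ((m : ℝ)) ^ ((2 - 2 * H) * q)) :=
      Real.summable_one_div_nat_rpow.2 hex
    have h2 := ((summable_nat_add_iff 1).2 h1).mul_left (9 ^ q)
    refine h2.congr fun m => ?_
    unfold fgnR
    rw [mul_pow, ← Real.rpow_natCast (((m : ℝ) + 1) ^ (2 * H - 2)), ← Real.rpow_mul (by positivity),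
      one_div, ← Real.rpow_neg (by positivity)]
    push_cast
    congr 2
    ring
  refine Summable.of_nat_of_neg ?_ ?_
  · simpa using hnat
  · simpa using hnat

lemma double_sum {g : ℤ → ℝ} (hg : Summable g) (h0 : ∀ z, 0 ≤ g z) (n : ℕ) :
    ∑ i ∈ Finset.range n, ∑ j ∈ Finset.range n, g ((i : ℤ) - j) ≤ n * ∑' z, g z := by
  have : ∀ i ∈ Finset.range n, ∑ j ∈ Finset.range n, g ((i : ℤ) - j) ≤ ∑' z, g z := by
    intro i _
    have hinj : Set.InjOn (fun j : ℕ => (i : ℤ) - j) (Finset.range n : Set ℕ) := by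
      intro a _ b _ h
      simp only at h
      omega
    rw [← Finset.sum_image (f := g) (g := fun j : ℕ => (i : ℤ) - j) hinj]
    exact hg.sum_le_tsum _ (fun z _ => h0 z)
  calc _ ≤ ∑ i ∈ Finset.range n, ∑' z, g z := Finset.sum_le_sum this
    _ = _ := by simp

section
variable {Ω : Type*} [MeasureSpace Ω] [IsProbabilityMeasure (ℙ : Measure Ω)]
  {B : ℝ → Ω → ℝ} {H : ℝ}

lemma int_four {F G K L : Ω → ℝ} (hF : Integrable F ℙ) (hG : Integrable G ℙ)
    (hK : Integrable K ℙ) (hL : Integrable L ℙ) :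
    ∫ ω, ((F ω - G ω) - (K ω - L ω)) ∂ℙ
      = (∫ ω, F ω ∂ℙ - ∫ ω, G ω ∂ℙ) - (∫ ω, K ω ∂ℙ - ∫ ω, L ω ∂ℙ) := by
  have h1 : Integrable (fun ω => F ω - G ω) ℙ := hF.sub hG
  have h2 : Integrable (fun ω => K ω - L ω) ℙ := hK.sub hL
  rw [integral_sub h1 h2, integral_sub hF hG, integral_sub hK hL]

lemma fbm_gp (hB : IsFractionalBrownianMotion B H) :
    IsGaussianProcess (fun (t : NNReal) ω => B t ω) (ℙ : Measure Ω) := by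
  classical
  refine ⟨fun I => ⟨isGaussian_of_map_eq_gaussianReal fun L => ?_⟩⟩
  let e := (Fintype.equivFin I).symm
  obtain ⟨v, hv⟩ := hB.gaussian_fdd (Fintype.card I) (fun m => ((e m : NNReal) : ℝ))
    (fun m => NNReal.coe_nonneg _) (fun m => L (Pi.single (e m) 1))
  refine ⟨0, v, ?_⟩
  have hmeas : Measurable (fun ω => I.restrict (fun x : NNReal => B x ω)) :=
    measurable_pi_lambda _ fun i => hB.measurable _
  rw [← hv, Measure.map_map (by fun_prop) hmeas]
  congr 1
  ext ω
  have := L.toLinearMap.pi_apply_eq_sum_univ (I.restrict (fun t : NNReal => B t ω))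
  simp only [ContinuousLinearMap.coe_coe] at this
  rw [Function.comp_apply, this, ← e.sum_comp]
  refine Finset.sum_congr rfl fun m _ => ?_
  simp only [Finset.restrict, smul_eq_mul]
  rw [mul_comm]
  congr 2
  ext j
  simp [Pi.single_apply, eq_comm]

lemma fbm_incr (hB : IsFractionalBrownianMotion B H) (hH0 : 0 < H) {n : ℕ} (hn : 0 < n) :
    StdGP (ℙ : Measure Ω)
      (fun (k : ℕ) ω => (n : ℝ) ^ H * (B (((k : ℝ) + 1) / n) ω - B ((k : ℝ) / n) ω))
      (fun k l => fgn H ((k : ℤ) - l)) := by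
  classical
  have hg := fbm_gp hB
  have hL : ∀ t : ℝ, 0 ≤ t → AllLp ℙ (B t) := fun t ht =>
    AllLp.of_gaussian (hg.hasGaussianLaw_eval ⟨t, ht⟩)
  have hmean : ∀ t : ℝ, 0 ≤ t → ∫ ω, B t ω ∂ℙ = 0 := by
    intro t ht
    obtain ⟨v, hv⟩ := hB.gaussian_fdd 1 (fun _ => t) (fun _ => ht) (fun _ => 1)
    simp only [Finset.univ_unique, Finset.sum_singleton, one_mul] at hv
    have : ∫ x, x ∂(Measure.map (fun ω => B t ω) ℙ) = 0 := by
      rw [hv]; simp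
    rwa [integral_map (hB.measurable t).aemeasurable (by fun_prop)] at this
  have hn' : (0 : ℝ) < n := by exact_mod_cast hn
  refine ⟨?_, ?_, ?_, ?_⟩
  · refine hg.of_isGaussianProcess fun k => ?_
    let t1 : NNReal := ((k : NNReal) + 1) / n
    let t0 : NNReal := (k : NNReal) / n
    refine ⟨{t1, t0}, ((n : ℝ) ^ H) • (ContinuousLinearMap.proj ⟨t1, by simp⟩
        - ContinuousLinearMap.proj ⟨t0, by simp⟩), fun ω => ?_⟩
    simp [t1, t0]
  · intro k
    rw [integral_const_mul, integral_sub (hL _ (by positivity)).integrable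
      (hL _ (by positivity)).integrable, hmean _ (by positivity), hmean _ (by positivity)]
    simp
  · intro k l
    have hI : ∀ s t : ℝ, 0 ≤ s → 0 ≤ t → Integrable (fun ω => B s ω * B t ω) ℙ :=
      fun s t hs ht => ((hL s hs).mul (hL t ht)).integrable
    have e : ∀ ω, (n : ℝ) ^ H * (B (((k : ℝ) + 1) / n) ω - B ((k : ℝ) / n) ω)
        * ((n : ℝ) ^ H * (B (((l : ℝ) + 1) / n) ω - B ((l : ℝ) / n) ω))
        = ((n : ℝ) ^ H * (n : ℝ) ^ H) *
          ((B (((k : ℝ) + 1) / n) ω * B (((l : ℝ) + 1) / n) ω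
            - B (((k : ℝ) + 1) / n) ω * B ((l : ℝ) / n) ω)
          - (B ((k : ℝ) / n) ω * B (((l : ℝ) + 1) / n) ω
            - B ((k : ℝ) / n) ω * B ((l : ℝ) / n) ω)) := by intro ω; ring
    have pk : (0 : ℝ) ≤ (k : ℝ) / n := by positivity
    have pl : (0 : ℝ) ≤ (l : ℝ) / n := by positivity
    have pk1 : (0 : ℝ) ≤ ((k : ℝ) + 1) / n := by positivity
    have pl1 : (0 : ℝ) ≤ ((l : ℝ) + 1) / n := by positivity
    simp_rw [e]
    rw [integral_const_mul, int_four (hI _ _ pk1 pl1) (hI _ _ pk1 pl)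
      (hI _ _ pk pl1) (hI _ _ pk pl), hB.covariance _ _ pk1 pl1,
      hB.covariance _ _ pk1 pl, hB.covariance _ _ pk pl1, hB.covariance _ _ pk pl]
    have a1 : |((l : ℝ) + 1) / n - ((k : ℝ) + 1) / n| = |(k : ℝ) - l| / n := by
      rw [← sub_div, abs_div, abs_of_pos hn', abs_sub_comm]; congr 2; ring
    have a2 : |(l : ℝ) / n - ((k : ℝ) + 1) / n| = |(k : ℝ) - l + 1| / n := by
      rw [← sub_div, abs_div, abs_of_pos hn', abs_sub_comm]; congr 2; ring
    have a3 : |((l : ℝ) + 1) / n - (k : ℝ) / n| = |(k : ℝ) - l - 1| / n := by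
      rw [← sub_div, abs_div, abs_of_pos hn', abs_sub_comm]; congr 2; ring
    have a4 : |(l : ℝ) / n - (k : ℝ) / n| = |(k : ℝ) - l| / n := by
      rw [← sub_div, abs_div, abs_of_pos hn', abs_sub_comm]
    rw [a1, a2, a3, a4, Real.div_rpow (abs_nonneg ((k : ℝ) - l)) hn'.le,
      Real.div_rpow (abs_nonneg ((k : ℝ) - l + 1)) hn'.le,
      Real.div_rpow (abs_nonneg ((k : ℝ) - l - 1)) hn'.le]
    unfold fgn
    have hnn : (n : ℝ) ^ (2 * H) = (n : ℝ) ^ H * (n : ℝ) ^ H := by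
      rw [two_mul, Real.rpow_add hn']
    have hp : (0 : ℝ) < (n : ℝ) ^ H := by positivity
    push_cast
    rw [hnn]
    field_simp
    ring
  · intro k
    have h0' : (0 : ℝ) ^ (2 * H) = 0 := Real.zero_rpow (by linarith)
    simp [fgn, h0']

lemma hermiteVariation_eq (B : ℝ → Ω → ℝ) (H : ℝ) (q n : ℕ) (ω : Ω) :
    hermiteVariation B H q n ω = ∑ k ∈ Finset.range n, (hermR q).eval
      ((n : ℝ) ^ H * (B (((k : ℝ) + 1) / n) ω - B ((k : ℝ) / n) ω)) := by
  unfold hermiteVariation hermR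
  refine Finset.sum_congr rfl fun k _ => ?_
  rw [Polynomial.aeval_def, Polynomial.eval_map]
  rfl

lemma hermiteVariation_moment (hB : IsFractionalBrownianMotion B H) {q : ℕ} (hq : 2 ≤ q)
    (hH0 : 0 < H) (hH1 : H < 1 - 1 / (2 * q)) :
    ∃ C : ℝ, 0 ≤ C ∧ ∀ n : ℕ, 0 < n →
      Integrable (fun ω => hermiteVariation B H q n ω ^ 4) ℙ ∧
      ∫ ω, hermiteVariation B H q n ω ^ 4 ∂ℙ ≤ C * (n : ℝ) ^ 2 := by
  obtain ⟨K, hK, hb⟩ := fourth_moment (ι := ℕ) (P := (ℙ : Measure Ω)) q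
  have hlt : H < 1 := by
    have : (0 : ℝ) ≤ 1 / (2 * q) := by positivity
    linarith
  have hsum := fgnR_summable hq hH1
  refine ⟨K * (∑' z : ℤ, fgnR H z.natAbs ^ q) ^ 2, by positivity, fun n hn => ?_⟩
  have hgp := fbm_incr hB hH0 hn
  simp_rw [hermiteVariation_eq]
  constructor
  · exact ((AllLp.sum _ fun k _ => (AllLp.of_gaussian (hgp.gp.hasGaussianLaw_eval k)).eval _).pow
      4).integrable
  · have := hb _ _ (fun k l => fgnR H ((k : ℤ) - l).natAbs) hgp (fun k l => fgn_le hH0 hlt _)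
      (fun k l => fgnR_pos _ _) (Finset.range n)
    refine this.trans ?_
    have h2 := double_sum hsum (fun z => pow_nonneg (fgnR_pos H _).le _) n
    have h3 : 0 ≤ ∑ i ∈ Finset.range n, ∑ j ∈ Finset.range n,
        fgnR H ((i : ℤ) - j).natAbs ^ q :=
      Finset.sum_nonneg fun i _ => Finset.sum_nonneg fun j _ => pow_nonneg (fgnR_pos H _).le _
    calc _ ≤ K * (n * ∑' z : ℤ, fgnR H z.natAbs ^ q) ^ 2 := by gcongr
      _ = _ := by ring

lemma hermiteVariation_measurable (hB : IsFractionalBrownianMotion B H) (q n : ℕ) :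
    Measurable (hermiteVariation B H q n) := by
  have : hermiteVariation B H q n = fun ω => ∑ k ∈ Finset.range n, (hermR q).eval
      ((n : ℝ) ^ H * (B (((k : ℝ) + 1) / n) ω - B ((k : ℝ) / n) ω)) := by
    ext ω; exact hermiteVariation_eq B H q n ω
  rw [this]
  refine Finset.measurable_fun_sum _ fun k _ => ?_
  exact (hermR q).continuous.measurable.comp
    (((hB.measurable _).sub (hB.measurable _)).const_mul _)
end

lemma tail_sum {m : ℕ} (hm : 0 < m) (N : ℕ) :
    ∑ k ∈ Finset.range N, 1 / (((k + m : ℕ) : ℝ) + 1) ^ 2 ≤ 1 / (m : ℝ) := by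
  have hm' : (0 : ℝ) < m := by exact_mod_cast hm
  have : ∑ k ∈ Finset.range N, 1 / (((k + m : ℕ) : ℝ) + 1) ^ 2
      ≤ 1 / (m : ℝ) - 1 / ((N : ℝ) + m) := by
    induction N with
    | zero => simp
    | succ N ih =>
      rw [Finset.sum_range_succ]
      have hp : (0 : ℝ) < (N : ℝ) + m := by positivity
      have : 1 / (((N + m : ℕ) : ℝ) + 1) ^ 2
          ≤ 1 / ((N : ℝ) + m) - 1 / (((N + 1 : ℕ) : ℝ) + m) := by
        push_cast
        rw [div_sub_div _ _ hp.ne' (by positivity), div_le_div_iff₀ (by positivity) (by positivity)]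
        nlinarith
      linarith
  have h2 : (0 : ℝ) ≤ 1 / ((N : ℝ) + m) := by positivity
  linarith

lemma sum_lim {f : ℝ → ℕ → ℝ} {C : ℝ} (hC : 0 ≤ C)
    (h1 : ∀ a > 0, ∀ n, |f a n| ≤ 1)
    (h2 : ∀ η > 0, ∃ n0, ∀ n ≥ n0, ∀ a > 0, |f a n| ≤ η)
    (h3 : ∀ a > 0, ∀ n, |f a n| ≤ C / a ^ 4 * (1 / ((n : ℝ) + 1) ^ 2)) :
    Tendsto (fun a => a ^ 2 * ∑' n, f a n) (𝓝[>] 0) (𝓝 0) := by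
  rw [Metric.tendsto_nhds]
  intro δ hδ
  obtain ⟨K, hK⟩ := exists_nat_gt (2 * (1 + C) / δ)
  have hK0 : (0 : ℝ) < K := lt_of_le_of_lt (by positivity) hK
  obtain ⟨n0, hn0⟩ := h2 (1 / (K : ℝ) ^ 2) (by positivity)
  have hlim : Tendsto (fun a : ℝ => a ^ 2 * ((n0 : ℝ) + 1 / (K : ℝ) ^ 2)) (𝓝[>] 0) (𝓝 0) := by
    have : Continuous (fun a : ℝ => a ^ 2 * ((n0 : ℝ) + 1 / (K : ℝ) ^ 2)) := by fun_prop
    have h := this.tendsto 0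
    simp only [ne_eq, OfNat.ofNat_ne_zero, not_false_eq_true, zero_pow, zero_mul] at h
    exact h.mono_left nhdsWithin_le_nhds
  filter_upwards [hlim.eventually (gt_mem_nhds (half_pos hδ)), self_mem_nhdsWithin] with a ha ha0
  have ha0 : 0 < a := ha0
  rw [Real.dist_eq, sub_zero, abs_mul, abs_of_nonneg (by positivity : 0 ≤ a ^ 2)]
  have hsq : Summable (fun n : ℕ => 1 / ((n : ℝ) + 1) ^ 2) := by
    have := (summable_nat_add_iff 1).2 (Real.summable_one_div_nat_pow.2 (show 1 < 2 by norm_num))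
    simpa using this
  have habs : Summable (fun n => |f a n|) :=
    Summable.of_nonneg_of_le (fun n => abs_nonneg _) (h3 a ha0) (hsq.mul_left _)
  have hle : |∑' n, f a n| ≤ ∑' n, |f a n| := by
    have := norm_tsum_le_tsum_norm (f := f a) (by simpa using habs)
    simpa using this
  obtain ⟨m, hm⟩ : ∃ m : ℕ, m = ⌈(K : ℝ) / a ^ 2⌉₊ := ⟨_, rfl⟩
  have hmlow : (K : ℝ) / a ^ 2 ≤ m := hm ▸ Nat.le_ceil _
  have hmup : (m : ℝ) < K / a ^ 2 + 1 := hm ▸ Nat.ceil_lt_add_one (by positivity)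
  have hmpos' : (0 : ℝ) < m := lt_of_lt_of_le (by positivity) hmlow
  have hmpos : 0 < m := by exact_mod_cast hmpos'
  have htail : ∑' k, |f a (k + m)| ≤ C / a ^ 4 * (1 / m) := by
    refine Real.tsum_le_of_sum_range_le (fun _ => abs_nonneg _) fun N => ?_
    calc _ ≤ ∑ k ∈ Finset.range N, C / a ^ 4 * (1 / (((k + m : ℕ) : ℝ) + 1) ^ 2) :=
          Finset.sum_le_sum fun k _ => h3 a ha0 _
      _ = C / a ^ 4 * ∑ k ∈ Finset.range N, (1 / (((k + m : ℕ) : ℝ) + 1) ^ 2) := by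
          rw [Finset.mul_sum]
      _ ≤ _ := by gcongr; exact tail_sum hmpos N
  have hhead : ∑ k ∈ Finset.range m, |f a k| ≤ n0 + m * (1 / (K : ℝ) ^ 2) := by
    calc _ ≤ ∑ k ∈ Finset.range m, ((if k < n0 then (1 : ℝ) else 0) + 1 / (K : ℝ) ^ 2) := by
          refine Finset.sum_le_sum fun k _ => ?_
          have hp : (0 : ℝ) ≤ 1 / (K : ℝ) ^ 2 := by positivity
          split_ifs with h
          · linarith [h1 a ha0 k]
          · linarith [hn0 k (not_lt.1 h) a ha0]
      _ ≤ _ := by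
          rw [Finset.sum_add_distrib, Finset.sum_const, Finset.card_range, nsmul_eq_mul]
          gcongr
          rw [← Finset.sum_filter, Finset.sum_const, nsmul_eq_mul, mul_one]
          have : (Finset.range m).filter (· < n0) ⊆ Finset.range n0 := by
            intro x hx
            simpa using (Finset.mem_filter.1 hx).2
          have := Finset.card_le_card this
          rw [Finset.card_range] at this
          exact_mod_cast this
  rw [← habs.sum_add_tsum_nat_add m] at hle
  have e1 : C / a ^ 4 * (1 / m) ≤ C / a ^ 4 * (a ^ 2 / K) := by
    have : 1 / (m : ℝ) ≤ a ^ 2 / K := by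
      rw [div_le_div_iff₀ hmpos' hK0]
      rw [div_le_iff₀ (by positivity)] at hmlow
      linarith
    gcongr
  have e2 : (m : ℝ) * (1 / (K : ℝ) ^ 2) ≤ (K / a ^ 2 + 1) * (1 / (K : ℝ) ^ 2) := by gcongr
  have e3 : a ^ 2 * |∑' n, f a n| ≤ a ^ 2 * (n0 + (K / a ^ 2 + 1) * (1 / (K : ℝ) ^ 2)
      + C / a ^ 4 * (a ^ 2 / K)) := by gcongr; linarith
  have e4 : a ^ 2 * (n0 + (K / a ^ 2 + 1) * (1 / (K : ℝ) ^ 2)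
      + C / a ^ 4 * (a ^ 2 / K)) = a ^ 2 * ((n0 : ℝ) + 1 / (K : ℝ) ^ 2) + (1 + C) / K := by
    field_simp
    ring
  have e5 : (1 + C) / K < δ / 2 := by
    rw [div_lt_iff₀ hδ] at hK
    rw [div_lt_iff₀ hK0]
    linarith
  linarith

lemma polya {Gn : ℕ → ℝ → ℝ} {G : ℝ → ℝ} (hGn : ∀ n, Antitone (Gn n)) (hG : Antitone G)
    (h0n : ∀ n x, 0 ≤ Gn n x) (h0 : ∀ x, 0 ≤ G x)
    (hc : Continuous G) (hinf : Tendsto G atTop (𝓝 0))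
    (hlim : ∀ x, Tendsto (fun n => Gn n x) atTop (𝓝 (G x))) :
    ∀ η > 0, ∃ n0, ∀ n ≥ n0, ∀ x ≥ 0, |Gn n x - G x| ≤ η := by
  intro η hη
  obtain ⟨M, hM⟩ := (hinf.eventually (gt_mem_nhds (half_pos hη))).exists
  have hloc : TendstoLocallyUniformlyOn Gn G atTop (Set.Icc 0 M) := by
    rw [Metric.tendstoLocallyUniformlyOn_iff]
    intro e he x _
    obtain ⟨d, hd, hd2⟩ := Metric.continuousAt_iff.1 (hc.continuousAt (x := x)) (e / 3)
      (by linarith)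
    have a1 := hd2 (x := x - d / 2) (by rw [Real.dist_eq, abs_lt]; constructor <;> linarith)
    have a2 := hd2 (x := x + d / 2) (by rw [Real.dist_eq, abs_lt]; constructor <;> linarith)
    rw [Real.dist_eq, abs_lt] at a1 a2
    refine ⟨Set.Icc (x - d / 2) (x + d / 2),
      mem_nhdsWithin_of_mem_nhds (Icc_mem_nhds (by linarith) (by linarith)), ?_⟩
    filter_upwards [Metric.tendsto_nhds.1 (hlim (x - d / 2)) (e / 3) (by linarith),
      Metric.tendsto_nhds.1 (hlim (x + d / 2)) (e / 3) (by linarith)] with n b1 b2 y hy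
    rw [Real.dist_eq, abs_lt] at b1 b2 ⊢
    have c1 := hGn n hy.1
    have c2 := hGn n hy.2
    have c3 := hG hy.1
    have c4 := hG hy.2
    constructor <;> linarith
  have hun := (tendstoLocallyUniformlyOn_iff_tendstoUniformlyOn_of_compact isCompact_Icc).1 hloc
  rw [Metric.tendstoUniformlyOn_iff] at hun
  obtain ⟨n1, hn1⟩ := eventually_atTop.1 (hun η hη)
  obtain ⟨n2, hn2⟩ := eventually_atTop.1 (Metric.tendsto_nhds.1 (hlim M) (η / 2) (by linarith))
  refine ⟨max n1 n2, fun n hn x hx => ?_⟩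
  by_cases hxM : x ≤ M
  · have := hn1 n (le_of_max_le_left hn) x ⟨hx, hxM⟩
    rw [dist_comm, Real.dist_eq] at this
    exact this.le
  · have b := hn2 n (le_of_max_le_right hn)
    rw [Real.dist_eq, abs_lt] at b
    have c1 := hGn n (not_le.1 hxM).le
    have c2 := hG (not_le.1 hxM).le
    have := h0n n x
    have := h0 x
    rw [abs_le]
    constructor <;> linarith

lemma markov4 {α : Type*} [MeasurableSpace α] {μ : Measure α} [IsFiniteMeasure μ] {X : α → ℝ}
    (hX : Integrable (fun w => X w ^ 4) μ) {x : ℝ} (hx : 0 < x) :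
    (μ {w | x < |X w|}).toReal ≤ (∫ w, X w ^ 4 ∂μ) / x ^ 4 := by
  rw [le_div_iff₀ (by positivity), mul_comm]
  refine le_trans ?_ (mul_meas_ge_le_integral_of_nonneg
    (Eventually.of_forall fun w => (by positivity : 0 ≤ X w ^ 4)) hX (x ^ 4))
  refine mul_le_mul_of_nonneg_left ?_ (by positivity)
  refine ENNReal.toReal_mono (measure_ne_top _ _) (measure_mono fun w hw => ?_)
  have hw : x < |X w| := hw
  show x ^ 4 ≤ X w ^ 4
  have : X w ^ 4 = |X w| ^ 4 := by rw [← abs_pow, abs_of_nonneg (by positivity)]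
  rw [this]
  gcongr

/-- two-sided Gaussian tail -/
noncomputable def gtail (x : ℝ) : ℝ := (gaussianReal 0 1 {y | x < |y|}).toReal

lemma gauss_null (x : ℝ) : gaussianReal 0 1 {y : ℝ | |y| = x} = 0 := by
  have := nullSingletonClass_gaussianReal (μ := 0) (v := 1) one_ne_zero
  refine measure_mono_null (t := {x, -x}) (fun y hy => ?_) ((Set.toFinite _).measure_zero _)
  have hy : |y| = x := hy
  rcases abs_choice y with h | h
  · left; rw [← hy, h]
  · right; simp only [Set.mem_singleton_iff]; rw [← hy, h]; ring

lemma gtail_continuous : Continuous gtail := by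
  have e : gtail = fun x => ∫ y, Set.indicator {y : ℝ | x < |y|} (fun _ => (1 : ℝ)) y
      ∂(gaussianReal 0 1) := by
    ext x
    rw [integral_indicator_const _ (measurableSet_lt measurable_const (by fun_prop))]
    simp [gtail, Measure.real]
  rw [e, continuous_iff_continuousAt]
  intro x
  refine tendsto_integral_filter_of_dominated_convergence (fun _ => (1 : ℝ)) ?_ ?_ ?_ ?_
  · exact Eventually.of_forall fun x => (measurable_const.indicator
      (measurableSet_lt measurable_const (by fun_prop))).aestronglyMeasurable
  · refine Eventually.of_forall fun x => Eventually.of_forall fun y => ?_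
    by_cases h : x < |y| <;> simp [Set.indicator, h]
  · exact integrable_const _
  · have : ∀ᵐ y ∂(gaussianReal 0 1), |y| ≠ x := by
      rw [ae_iff]; simpa using gauss_null x
    filter_upwards [this] with y hy
    refine tendsto_const_nhds.congr' ?_
    rcases lt_or_gt_of_ne hy with h | h
    · filter_upwards [lt_mem_nhds h] with z hz
      simp [Set.indicator, not_lt.2 h.le, not_lt.2 hz.le]
    · filter_upwards [gt_mem_nhds h] with z hz
      simp [Set.indicator, h, hz]

lemma gtail_le {x : ℝ} (hx : 0 < x) : gtail x ≤ (∫ y, y ^ 4 ∂(gaussianReal 0 1)) / x ^ 4 :=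
  markov4 (X := fun y => y) (((allLp_id_gaussian 1).pow 4).integrable) hx

lemma gtail_tendsto : Tendsto gtail atTop (𝓝 0) := by
  refine squeeze_zero' (Eventually.of_forall fun x => ENNReal.toReal_nonneg)
    (eventually_atTop.2 ⟨1, fun x hx => gtail_le (by linarith)⟩) ?_
  exact tendsto_const_nhds.div_atTop (tendsto_pow_atTop (by norm_num))

lemma weak_tail {Ω : Type*} [MeasureSpace Ω] [IsProbabilityMeasure (ℙ : Measure Ω)]
    {Z : ℕ → Ω → ℝ} (hZ : ∀ n, Measurable (Z n))
    (h : TendstoInDistribution Z (gaussianReal 0 1)) (x : ℝ) :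
    Tendsto (fun n => (ℙ {w | x < |Z n w|}).toReal) atTop (𝓝 (gtail x)) := by
  let ν : ℕ → ProbabilityMeasure ℝ := fun n =>
    ⟨Measure.map (Z n) ℙ, Measure.isProbabilityMeasure_map (hZ n).aemeasurable⟩
  let γ : ProbabilityMeasure ℝ := ⟨gaussianReal 0 1, inferInstance⟩
  have hw : Tendsto ν atTop (𝓝 γ) := by
    rw [ProbabilityMeasure.tendsto_iff_forall_integral_tendsto]
    intro f
    refine (h f).congr fun n => ?_
    exact (integral_map (hZ n).aemeasurable f.continuous.aestronglyMeasurable).symm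
  have hm : MeasurableSet {y : ℝ | x < |y|} := measurableSet_lt measurable_const (by fun_prop)
  have := ProbabilityMeasure.tendsto_measure_of_null_frontier_of_tendsto' hw
    (E := {y : ℝ | x < |y|}) ?_
  · have h2 := (ENNReal.tendsto_toReal (measure_ne_top _ _)).comp this
    refine h2.congr fun n => ?_
    simp only [Function.comp, ν, ProbabilityMeasure.coe_mk]
    rw [Measure.map_apply (hZ n) hm]
    rfl
  · refine measure_mono_null ?_ (gauss_null x)
    intro y hy
    exact (frontier_lt_subset_eq continuous_const continuous_abs hy).symm

theorem stmt_10 {Ω : Type*} [MeasureSpace Ω] [IsProbabilityMeasure (ℙ : Measure Ω)]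
    (q : ℕ) (hq : 2 ≤ q) (H : ℝ) (hH0 : 0 < H) (hH1 : H < 1 - 1 / (2 * q))
    (B : ℝ → Ω → ℝ) (hB : IsFractionalBrownianMotion B H)
    (c₁ : ℝ) (hc₁ : 0 < c₁)
    (hconv : TendstoInDistribution
      (fun n ω => hermiteVariation B H q n ω / (c₁ * Real.sqrt n)) (gaussianReal 0 1))
    (N : Ω → ℝ) (hN : Measure.map N (ℙ : Measure Ω) = gaussianReal 0 1)
    (c : ℝ) (hc : 0 < c) :
    Tendsto
      (fun ε : ℝ =>
        (c * ε) ^ 2 *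
          ∑' n : ℕ,
            ((ℙ {ω | c * ε * Real.sqrt ((n : ℝ) + 1) <
                |hermiteVariation B H q (n + 1) ω / (c₁ * Real.sqrt ((n : ℝ) + 1))|}).toReal -
              (ℙ {ω | c * ε * Real.sqrt ((n : ℝ) + 1) < |N ω|}).toReal))
      (𝓝[>] 0) (𝓝 0) := by
  have hmeasZ : ∀ n : ℕ, Measurable
      (fun ω => hermiteVariation B H q n ω / (c₁ * Real.sqrt n)) := fun n =>
    (hermiteVariation_measurable hB q n).div_const _
  have hNm : AEMeasurable N (ℙ : Measure Ω) := by
    refine AEMeasurable.of_map_ne_zero ?_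
    rw [hN]
    exact IsProbabilityMeasure.ne_zero _
  have hNt : ∀ x : ℝ, (ℙ {ω | x < |N ω|}).toReal = gtail x := by
    intro x
    unfold gtail
    rw [← hN, Measure.map_apply_of_aemeasurable hNm
      (measurableSet_lt measurable_const (by fun_prop))]
    rfl
  have hpol := polya
    (Gn := fun n x => (ℙ {ω | x < |hermiteVariation B H q n ω / (c₁ * Real.sqrt n)|}).toReal)
    (G := gtail)
    (fun n x y hxy => ENNReal.toReal_mono (measure_ne_top _ _)
      (measure_mono fun ω hω => lt_of_le_of_lt hxy hω))
    (fun x y hxy => ENNReal.toReal_mono (measure_ne_top _ _)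
      (measure_mono fun ω hω => lt_of_le_of_lt hxy hω))
    (fun n x => ENNReal.toReal_nonneg) (fun x => ENNReal.toReal_nonneg)
    gtail_continuous gtail_tendsto (weak_tail hmeasZ hconv)
  obtain ⟨C, hC, hmom⟩ := hermiteVariation_moment hB hq hH0 hH1
  have hD : 0 ≤ ∫ y, y ^ 4 ∂(gaussianReal 0 1) := integral_nonneg fun y => by positivity
  have key := sum_lim (f := fun a n =>
      (ℙ {ω | a * Real.sqrt ((n : ℝ) + 1) <
        |hermiteVariation B H q (n + 1) ω / (c₁ * Real.sqrt ((n : ℝ) + 1))|}).toReal -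
      (ℙ {ω | a * Real.sqrt ((n : ℝ) + 1) < |N ω|}).toReal)
    (C := C / c₁ ^ 4 + ∫ y, y ^ 4 ∂(gaussianReal 0 1)) (by positivity) ?_ ?_ ?_
  · have hl : Tendsto (fun ε : ℝ => c * ε) (𝓝[>] 0) (𝓝[>] 0) := by
      refine tendsto_nhdsWithin_iff.2 ⟨?_, ?_⟩
      · have : Continuous (fun ε : ℝ => c * ε) := by fun_prop
        have h := this.tendsto 0
        rw [mul_zero] at h
        exact h.mono_left nhdsWithin_le_nhds
      · filter_upwards [self_mem_nhdsWithin] with ε hε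
        exact mul_pos hc hε
    exact key.comp hl
  · intro a _ n
    have p1 : ∀ s : Set Ω, (ℙ s).toReal ≤ 1 := fun s => by
      have := ENNReal.toReal_mono ENNReal.one_ne_top (prob_le_one (μ := (ℙ : Measure Ω)) (s := s))
      simpa using this
    rw [abs_le]
    constructor
    · have h1 := p1 {ω | a * Real.sqrt ((n : ℝ) + 1) < |N ω|}
      have h2 : 0 ≤ (ℙ {ω | a * Real.sqrt ((n : ℝ) + 1) <
        |hermiteVariation B H q (n + 1) ω / (c₁ * Real.sqrt ((n : ℝ) + 1))|}).toReal :=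
        ENNReal.toReal_nonneg
      linarith
    · have h1 := p1 {ω | a * Real.sqrt ((n : ℝ) + 1) <
        |hermiteVariation B H q (n + 1) ω / (c₁ * Real.sqrt ((n : ℝ) + 1))|}
      have h2 : 0 ≤ (ℙ {ω | a * Real.sqrt ((n : ℝ) + 1) < |N ω|}).toReal :=
        ENNReal.toReal_nonneg
      linarith
  · intro η hη
    obtain ⟨n0, h⟩ := hpol η hη
    refine ⟨n0, fun n hn a ha => ?_⟩
    have := h (n + 1) (by omega) (a * Real.sqrt ((n : ℝ) + 1)) (by positivity)
    rw [hNt]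
    simpa using this
  · intro a ha n
    rw [hNt]
    have hn1 : (0 : ℝ) < (n : ℝ) + 1 := by positivity
    have hs4 : Real.sqrt ((n : ℝ) + 1) ^ 4 = ((n : ℝ) + 1) ^ 2 := by
      rw [show 4 = 2 * 2 by norm_num, pow_mul, Real.sq_sqrt hn1.le]
    have hspos : 0 < Real.sqrt ((n : ℝ) + 1) := Real.sqrt_pos.2 hn1
    have hx : 0 < a * Real.sqrt ((n : ℝ) + 1) := by positivity
    obtain ⟨hi, hb⟩ := hmom (n + 1) (by omega)
    have ediv : ∀ ω, (hermiteVariation B H q (n + 1) ω / (c₁ * Real.sqrt ((n : ℝ) + 1))) ^ 4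
        = hermiteVariation B H q (n + 1) ω ^ 4 / (c₁ ^ 4 * ((n : ℝ) + 1) ^ 2) := fun ω => by
      rw [div_pow, mul_pow, hs4]
    have m1 := markov4 (μ := (ℙ : Measure Ω))
      (X := fun ω => hermiteVariation B H q (n + 1) ω / (c₁ * Real.sqrt ((n : ℝ) + 1)))
      (by simp_rw [ediv]; exact hi.div_const _) hx
    simp_rw [ediv] at m1
    rw [integral_div] at m1
    have m2 := gtail_le hx
    rw [mul_pow, hs4] at m1 m2
    have m3 : (∫ ω, hermiteVariation B H q (n + 1) ω ^ 4) / (c₁ ^ 4 * ((n : ℝ) + 1) ^ 2)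
        / (a ^ 4 * ((n : ℝ) + 1) ^ 2)
        ≤ C / c₁ ^ 4 / (a ^ 4 * ((n : ℝ) + 1) ^ 2) := by
      refine div_le_div_of_nonneg_right ?_ (by positivity)
      rw [div_le_div_iff₀ (by positivity) (by positivity)]
      push_cast at hb
      nlinarith [mul_le_mul_of_nonneg_right hb (by positivity : 0 ≤ c₁ ^ 4)]
    have e : (C / c₁ ^ 4 + ∫ y, y ^ 4 ∂(gaussianReal 0 1)) / a ^ 4 * (1 / ((n : ℝ) + 1) ^ 2)
        = C / c₁ ^ 4 / (a ^ 4 * ((n : ℝ) + 1) ^ 2)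
          + (∫ y, y ^ 4 ∂(gaussianReal 0 1)) / (a ^ 4 * ((n : ℝ) + 1) ^ 2) := by
      field_simp
    rw [e]
    have q1 : 0 ≤ C / c₁ ^ 4 / (a ^ 4 * ((n : ℝ) + 1) ^ 2) := by positivity
    have q2 : 0 ≤ (∫ y, y ^ 4 ∂(gaussianReal 0 1)) / (a ^ 4 * ((n : ℝ) + 1) ^ 2) := by positivity
    have q3 : 0 ≤ gtail (a * Real.sqrt ((n : ℝ) + 1)) := ENNReal.toReal_nonneg
    have q4 : 0 ≤ (ℙ {ω | a * Real.sqrt ((n : ℝ) + 1) <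
        |hermiteVariation B H q (n + 1) ω / (c₁ * Real.sqrt ((n : ℝ) + 1))|}).toReal :=
      ENNReal.toReal_nonneg
    rw [abs_le]
    constructor <;> linarith
end

section
/- Let q ≥ 2 be an integer, 1 − 1/(2q) < H < 1, and let c_{2,q,H} > 0 be the constant for which V_n/(c_{2,q,H} n^{1−q(1−H)}) converges in L²(Ω) to a random variable Z with E Z² = 1. Then ε^{1/(1−q(1−H))} · Σ_{n≥1} P(|V_n| > ε n^{2−2q(1−H)}) converges to c_{2,q,H}^{1/(1−q(1−H))} · E|Z|^{1/(1−q(1−H))} as ε → 0⁺ (Hsu–Robbins theorem for the variations of fractional Brownian motion, non-central regime). -/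
open MeasureTheory ProbabilityTheory Filter Real Topology

/-- A step function integral is a sum. -/
lemma hr_lintegral_floor (f : ℕ → ENNReal) (δ : ℝ) (hδ : 0 < δ) :
    ∫⁻ t in Set.Ioi (0 : ℝ), f ⌊t / δ⌋₊ = ENNReal.ofReal δ * ∑' k, f k := by
  have hm : Measurable (fun t : ℝ => ⌊t / δ⌋₊) :=
    Nat.measurable_floor.comp (measurable_id.div_const δ)
  rw [restrict_Ioi_eq_restrict_Ici]
  rw [← lintegral_map (f := f) (g := fun t : ℝ => ⌊t / δ⌋₊) (measurable_from_nat) hm,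
    lintegral_countable', ← ENNReal.tsum_mul_left]
  congr 1
  ext k
  rw [mul_comm]
  congr 1
  rw [Measure.map_apply hm (measurableSet_singleton k),
    Measure.restrict_apply (hm (measurableSet_singleton k))]
  have : (fun t : ℝ => ⌊t / δ⌋₊) ⁻¹' {k} ∩ Set.Ici 0 = Set.Ico (k * δ) ((k + 1) * δ) := by
    ext t
    simp only [Set.mem_inter_iff, Set.mem_preimage, Set.mem_singleton_iff, Set.mem_Ici,
      Set.mem_Ico]
    constructor
    · rintro ⟨h1, h2⟩
      rw [Nat.floor_eq_iff (by positivity)] at h1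
      rwa [le_div_iff₀ hδ, div_lt_iff₀ hδ] at h1
    · rintro h
      have h0 : 0 ≤ t := le_trans (by positivity) h.1
      refine ⟨?_, h0⟩
      rw [Nat.floor_eq_iff (by positivity)]
      rwa [le_div_iff₀ hδ, div_lt_iff₀ hδ]
  rw [this, Real.volume_Ico]
  congr 1
  ring

/-- Convergence of tail probabilities with moving thresholds. -/
lemma hr_tail {Ω : Type*} [MeasurableSpace Ω] (μ : Measure Ω) [IsProbabilityMeasure μ]
    (X : ℕ → Ω → ℝ) (Y : Ω → ℝ) (hX : ∀ n, AEMeasurable (X n) μ) (hY : AEMeasurable Y μ)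
    (h : Tendsto (fun n => eLpNorm (X n - Y) 2 μ) atTop (𝓝 0))
    {l : Filter ℝ} [l.IsCountablyGenerated] [l.NeBot] (n : ℝ → ℕ) (hn : Tendsto n l atTop)
    (τ : ℝ → ℝ) (τ0 : ℝ) (hτ : Tendsto τ l (𝓝 τ0)) (h0 : μ {ω | Y ω = τ0} = 0) :
    Tendsto (fun δ => μ {ω | τ δ < X (n δ) ω}) l (𝓝 (μ {ω | τ0 < Y ω})) := by
  have hm : ∀ δ, AEMeasurable (fun ω => X (n δ) ω - τ δ) μ := fun δ => (hX _).sub_const _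
  have hmY : AEMeasurable (fun ω => Y ω - τ0) μ := hY.sub_const _
  have hT : TendstoInMeasure μ (fun δ ω => X (n δ) ω - τ δ) l (fun ω => Y ω - τ0) := by
    apply tendstoInMeasure_of_tendsto_eLpNorm_of_ne_top (p := 2) (by simp) (by simp)
      (fun δ => (hm δ).aestronglyMeasurable) hmY.aestronglyMeasurable
    have h1 : Tendsto (fun δ => eLpNorm (X (n δ) - Y) 2 μ + ‖τ δ - τ0‖ₑ) l (𝓝 0) := by
      have h2 : Tendsto (fun δ => ‖τ δ - τ0‖ₑ) l (𝓝 0) := by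
        have := (hτ.sub_const τ0).enorm
        simpa using this
      simpa using (h.comp hn).add h2
    refine tendsto_of_tendsto_of_tendsto_of_le_of_le tendsto_const_nhds h1
      (fun _ => zero_le) (fun δ => ?_)
    have e : ((fun ω => X (n δ) ω - τ δ) - fun ω => Y ω - τ0)
        = (X (n δ) - Y) - (fun _ => τ δ - τ0) := by
      ext ω; simp; ring
    show eLpNorm ((fun ω => X (n δ) ω - τ δ) - fun ω => Y ω - τ0) 2 μ ≤ _
    rw [e]
    refine (eLpNorm_sub_le ((hX _).sub hY).aestronglyMeasurable
      aestronglyMeasurable_const (by norm_num)).trans ?_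
    rw [eLpNorm_const _ (by simp) (IsProbabilityMeasure.ne_zero μ)]
    simp
  have hD := (hT.tendstoInDistribution hm).tendsto
  have := ProbabilityMeasure.tendsto_measure_of_null_frontier_of_tendsto' hD
    (E := Set.Ioi 0) (by
      simp only [frontier_Ioi, ProbabilityMeasure.coe_mk]
      rw [Measure.map_apply_of_aemeasurable hmY (measurableSet_singleton 0)]
      convert h0 using 2
      ext ω; simp [sub_eq_zero])
  simp only [ProbabilityMeasure.coe_mk] at this
  rw [Measure.map_apply_of_aemeasurable hmY measurableSet_Ioi] at this
  simp_rw [Measure.map_apply_of_aemeasurable (hm _) measurableSet_Ioi] at this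
  simpa [Set.preimage] using this

lemma hr_core {Ω : Type*} [MeasurableSpace Ω] (μ : Measure Ω) [IsProbabilityMeasure μ]
    (X : ℕ → Ω → ℝ) (Y : Ω → ℝ) (hX : ∀ n, AEMeasurable (X n) μ)
    (hY2 : MemLp Y 2 μ) (hY0 : ∀ ω, 0 ≤ Y ω) (a : ℝ) (ha : 1 / 2 < a)
    (h : Tendsto (fun n => eLpNorm (X n - Y) 2 μ) atTop (𝓝 0)) :
    Tendsto (fun δ : ℝ => ENNReal.ofReal δ *
        ∑' k : ℕ, μ {ω | (δ * ((k : ℝ) + 1)) ^ a < X (k + 1) ω})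
      (𝓝[>] 0) (𝓝 (∫⁻ ω, ENNReal.ofReal (Y ω ^ (1 / a)) ∂μ)) := by
  have ha0 : 0 < a := by linarith
  have hY : AEMeasurable Y μ := hY2.1.aemeasurable
  rw [lintegral_eq_lintegral_meas_lt μ (Eventually.of_forall fun ω => rpow_nonneg (hY0 ω) _)
    (hY.pow_const _)]
  set M : ENNReal := eLpNorm Y 2 μ + 1 with hM
  have hMtop : M ≠ ⊤ := by simp [hM, hY2.2.ne]
  obtain ⟨N, hN⟩ : ∃ N : ℕ, ∀ n ≥ N, eLpNorm (X n) 2 μ ≤ M := by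
    have h1 : ∀ᶠ n in atTop, eLpNorm (X n - Y) 2 μ < 1 := h.eventually (gt_mem_nhds one_pos)
    obtain ⟨N, hN⟩ := eventually_atTop.1 h1
    refine ⟨N, fun n hn => ?_⟩
    have e : X n = Y + (X n - Y) := by ext ω; simp
    rw [e]
    refine (eLpNorm_add_le hY.aestronglyMeasurable
      ((hX n).sub hY).aestronglyMeasurable (by norm_num)).trans ?_
    exact add_le_add le_rfl (hN n hn).le
  have hpos : ∀ᶠ δ : ℝ in 𝓝[>] 0, 0 < δ ∧ δ ≤ 1 := by
    filter_upwards [Ioc_mem_nhdsGT (zero_lt_one (α := ℝ))] with δ hδ using hδ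
  have hcongr : (fun δ : ℝ => ENNReal.ofReal δ *
        ∑' k : ℕ, μ {ω | (δ * ((k : ℝ) + 1)) ^ a < X (k + 1) ω}) =ᶠ[𝓝[>] 0]
      (fun δ : ℝ => ∫⁻ t in Set.Ioi (0 : ℝ),
        μ {ω | (δ * ((⌊t / δ⌋₊ : ℝ) + 1)) ^ a < X (⌊t / δ⌋₊ + 1) ω}) := by
    filter_upwards [hpos] with δ hδ
    exact (hr_lintegral_floor
      (fun k => μ {ω | (δ * ((k : ℝ) + 1)) ^ a < X (k + 1) ω}) δ hδ.1).symm
  refine Tendsto.congr' hcongr.symm ?_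
  set K : ℝ := (N : ℝ) + 1 with hK
  have hKpos : 0 < K := by positivity
  refine tendsto_lintegral_filter_of_dominated_convergence
    (fun t => (Set.Iic K).indicator 1 t +
      (Set.Ioi K).indicator (fun t => M ^ 2 * ENNReal.ofReal (t ^ (-(2 * a)))) t) ?_ ?_ ?_ ?_
  · refine Eventually.of_forall fun δ => ?_
    exact (measurable_from_nat (f := fun k : ℕ =>
      μ {ω | (δ * ((k : ℝ) + 1)) ^ a < X (k + 1) ω})).comp
      (Nat.measurable_floor.comp (measurable_id.div_const δ))
  · filter_upwards [hpos] with δ hδ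
    filter_upwards [ae_restrict_mem measurableSet_Ioi] with t ht
    have ht : 0 < t := ht
    rcases le_or_gt t K with hle | hgt
    · simp only [Set.indicator_of_mem (Set.mem_Iic.2 hle), Pi.one_apply]
      exact prob_le_one.trans (le_add_of_nonneg_right zero_le)
    · rw [Set.indicator_of_mem (Set.mem_Ioi.2 hgt),
        Set.indicator_of_notMem (by simpa using hgt), zero_add]
      have hfl : t / δ < (⌊t / δ⌋₊ : ℝ) + 1 := Nat.lt_floor_add_one _
      have htd : t ≤ t / δ := by
        rw [le_div_iff₀ hδ.1]; nlinarith [hδ.2]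
      have hn : N ≤ ⌊t / δ⌋₊ + 1 := by
        have : (N : ℝ) ≤ ((⌊t / δ⌋₊ + 1 : ℕ) : ℝ) := by push_cast; linarith
        exact_mod_cast this
      have hthr : t ≤ δ * ((⌊t / δ⌋₊ : ℝ) + 1) := by
        rw [div_lt_iff₀ hδ.1] at hfl; linarith
      have hta : 0 < t ^ a := rpow_pos_of_pos ht a
      calc μ {ω | (δ * ((⌊t / δ⌋₊ : ℝ) + 1)) ^ a < X (⌊t / δ⌋₊ + 1) ω}
          ≤ μ {ω | ENNReal.ofReal (t ^ a) ≤ ‖X (⌊t / δ⌋₊ + 1) ω‖ₑ} := by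
            refine measure_mono fun ω hω => ?_
            have hω : (δ * ((⌊t / δ⌋₊ : ℝ) + 1)) ^ a < X (⌊t / δ⌋₊ + 1) ω := hω
            have h3 : t ^ a ≤ (δ * ((⌊t / δ⌋₊ : ℝ) + 1)) ^ a :=
              rpow_le_rpow ht.le hthr ha0.le
            show ENNReal.ofReal (t ^ a) ≤ ‖X (⌊t / δ⌋₊ + 1) ω‖ₑ
            rw [← ofReal_norm_eq_enorm]
            exact ENNReal.ofReal_le_ofReal
              ((h3.trans hω.le).trans (le_abs_self _))
        _ ≤ (ENNReal.ofReal (t ^ a))⁻¹ ^ (2 : ENNReal).toReal *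
              eLpNorm (X (⌊t / δ⌋₊ + 1)) 2 μ ^ (2 : ENNReal).toReal :=
            meas_ge_le_mul_pow_eLpNorm_enorm μ (by simp) (by simp)
              (hX _).aestronglyMeasurable (by simpa using hta) (by simp)
        _ ≤ M ^ 2 * ENNReal.ofReal (t ^ (-(2 * a))) := by
            have e1 : (2 : ENNReal).toReal = ((2 : ℕ) : ℝ) := by simp
            rw [e1, ENNReal.rpow_natCast, ENNReal.rpow_natCast, mul_comm]
            refine mul_le_mul' (pow_le_pow_left' (hN _ hn) 2) (le_of_eq ?_)
            rw [← ENNReal.ofReal_inv_of_pos hta, ← ENNReal.ofReal_pow (by positivity)]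
            congr 1
            rw [← rpow_neg ht.le, ← rpow_natCast, ← rpow_mul ht.le]
            congr 1
            push_cast; ring
  · have hmi : Measurable ((Set.Iic K).indicator (1 : ℝ → ENNReal)) :=
      measurable_one.indicator measurableSet_Iic
    rw [lintegral_add_left hmi, lintegral_indicator_one measurableSet_Iic]
    refine ENNReal.add_ne_top.2 ⟨?_, ?_⟩
    · rw [Measure.restrict_apply measurableSet_Iic, Set.inter_comm, Set.Ioi_inter_Iic]
      simp
    · rw [lintegral_indicator measurableSet_Ioi, lintegral_const_mul' _ _ (by finiteness)]
      refine ENNReal.mul_ne_top (by finiteness) ?_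
      have h4 : IntegrableOn (fun t : ℝ => t ^ (-(2 * a))) (Set.Ioi K) :=
        integrableOn_Ioi_rpow_of_lt (by linarith) hKpos
      rw [Measure.restrict_restrict measurableSet_Ioi,
        Set.inter_eq_left.2 (Set.Ioi_subset_Ioi hKpos.le)]
      exact h4.lintegral_lt_top.ne
  · have hcount := Measure.countable_meas_level_set_pos₀ (μ := μ)
      (g := fun ω => Y ω ^ (1 / a)) (hY.pow_const _).nullMeasurable
    have hae : ∀ᵐ t : ℝ, t ∉ { t : ℝ | 0 < μ { ω | Y ω ^ (1 / a) = t } } :=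
      hcount.ae_notMem volume
    filter_upwards [ae_restrict_of_ae hae, ae_restrict_mem measurableSet_Ioi] with t h1 ht
    have ht : 0 < t := ht
    have key : ∀ ω, t < Y ω ^ (1 / a) ↔ t ^ a < Y ω := by
      intro ω
      rw [one_div, Real.lt_rpow_inv_iff_of_pos ht.le (hY0 ω) ha0]
    have key2 : ∀ ω, Y ω = t ^ a → Y ω ^ (1 / a) = t := by
      intro ω hω
      rw [hω, ← rpow_mul ht.le, mul_one_div_cancel ha0.ne', rpow_one]
    simp_rw [key]
    have hdiv : Tendsto (fun δ : ℝ => t / δ) (𝓝[>] 0) atTop :=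
      tendsto_inv_nhdsGT_zero.const_mul_atTop ht
    refine hr_tail μ X Y hX hY h (fun δ => ⌊t / δ⌋₊ + 1) ?_
      (fun δ => (δ * ((⌊t / δ⌋₊ : ℝ) + 1)) ^ a) (t ^ a) ?_ ?_
    · exact (tendsto_add_atTop_nat 1).comp (tendsto_nat_floor_atTop.comp hdiv)
    · refine Tendsto.rpow_const ?_ (Or.inl ht.ne')
      have hid : Tendsto (fun δ : ℝ => t + δ) (𝓝[>] 0) (𝓝 t) := by
        have : Tendsto (fun δ : ℝ => t + δ) (𝓝 0) (𝓝 (t + 0)) :=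
          tendsto_const_nhds.add tendsto_id
        rw [add_zero] at this
        exact this.mono_left nhdsWithin_le_nhds
      refine tendsto_of_tendsto_of_tendsto_of_le_of_le' tendsto_const_nhds hid ?_ ?_
      · filter_upwards [hpos] with δ hδ
        have hfl : t / δ < (⌊t / δ⌋₊ : ℝ) + 1 := Nat.lt_floor_add_one _
        rw [div_lt_iff₀ hδ.1] at hfl; linarith
      · filter_upwards [hpos] with δ hδ
        have hfl : (⌊t / δ⌋₊ : ℝ) ≤ t / δ := Nat.floor_le (div_nonneg ht.le hδ.1.le)
        rw [le_div_iff₀ hδ.1] at hfl; linarith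
    · have h2 : μ {ω | Y ω ^ (1 / a) = t} = 0 := by simpa using h1
      exact measure_mono_null (fun ω hω => key2 ω hω) h2

theorem stmt_13 {Ω : Type*} [MeasureSpace Ω] [IsProbabilityMeasure (ℙ : Measure Ω)]
    (q : ℕ) (hq : 2 ≤ q) (H : ℝ) (hH0 : 1 - 1 / (2 * q) < H) (hH1 : H < 1)
    (B : ℝ → Ω → ℝ) (hB : IsFractionalBrownianMotion B H)
    (c₂ : ℝ) (hc₂ : 0 < c₂) (Z : Ω → ℝ)
    (hZvar : (∫ ω, (Z ω) ^ 2 ∂(ℙ : Measure Ω)) = 1)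
    (hconv : Tendsto
      (fun n : ℕ => eLpNorm
        (fun ω => hermiteVariation B H q n ω / (c₂ * (n : ℝ) ^ (1 - q * (1 - H))) - Z ω)
        2 (ℙ : Measure Ω))
      atTop (𝓝 0)) :
    Tendsto
      (fun ε : ℝ =>
        ε ^ (1 / (1 - q * (1 - H))) *
          ∑' n : ℕ,
            (ℙ {ω | ε * ((n : ℝ) + 1) ^ (2 - 2 * q * (1 - H)) <
              |hermiteVariation B H q (n + 1) ω|}).toReal)
      (𝓝[>] 0)
      (𝓝 (c₂ ^ (1 / (1 - q * (1 - H))) *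
        ∫ ω, |Z ω| ^ (1 / (1 - q * (1 - H))) ∂(ℙ : Measure Ω))) := by
  set a : ℝ := 1 - q * (1 - H) with ha_def
  have hq0 : (0 : ℝ) < q := by
    have : 0 < q := by omega
    exact_mod_cast this
  have ha : 1 / 2 < a := by
    have h1 : 1 - H < 1 / (2 * q) := by linarith
    rw [lt_div_iff₀ (by positivity)] at h1
    rw [ha_def]; linarith
  have ha0 : 0 < a := by linarith
  have hexp : 2 - 2 * q * (1 - H) = a + a := by rw [ha_def]; ring
  rw [hexp]
  have hZ2 : Integrable (fun ω => (Z ω) ^ 2) (ℙ : Measure Ω) := by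
    by_contra hcon
    rw [integral_undef hcon] at hZvar
    exact zero_ne_one hZvar
  have habs : (fun ω => |Z ω|) = fun ω => √((Z ω) ^ 2) := by
    ext ω; rw [Real.sqrt_sq_eq_abs]
  have hYm : AEMeasurable (fun ω => |Z ω|) (ℙ : Measure Ω) := by
    rw [habs]; exact hZ2.aemeasurable.sqrt
  have hY2 : MemLp (fun ω => |Z ω|) 2 (ℙ : Measure Ω) := by
    rw [memLp_two_iff_integrable_sq hYm.aestronglyMeasurable]
    simpa [sq_abs] using hZ2
  have hVm : ∀ n, Measurable (hermiteVariation B H q n) := by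
    intro n
    unfold hermiteVariation
    refine Finset.measurable_sum _ fun k _ => ?_
    have hp : Measurable (fun x : ℝ => Polynomial.aeval x (Polynomial.hermite q)) :=
      (Polynomial.continuous_aeval _).measurable
    exact hp.comp (((hB.measurable _).sub (hB.measurable _)).const_mul _)
  set X : ℕ → Ω → ℝ := fun n ω => |hermiteVariation B H q n ω / (c₂ * (n : ℝ) ^ a)| with hXdef
  have hX : ∀ n, AEMeasurable (X n) (ℙ : Measure Ω) := fun n =>
    (((hVm n).div_const _).abs).aemeasurable
  have hconv' : Tendsto (fun n => eLpNorm (X n - fun ω => |Z ω|) 2 (ℙ : Measure Ω)) atTop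
      (𝓝 0) := by
    refine tendsto_of_tendsto_of_tendsto_of_le_of_le tendsto_const_nhds hconv
      (fun _ => zero_le) (fun n => ?_)
    refine eLpNorm_mono fun ω => ?_
    exact abs_abs_sub_abs_le _ _
  have hcore := hr_core (ℙ : Measure Ω) X (fun ω => |Z ω|) hX hY2 (fun ω => abs_nonneg _) a ha
    hconv'
  have hp2 : 1 / a ≤ 2 := by
    rw [div_le_iff₀ ha0]; linarith
  have hint : Integrable (fun ω => |Z ω| ^ (1 / a)) (ℙ : Measure Ω) := by
    refine ((integrable_const (1 : ℝ)).add hZ2).mono' (hYm.pow_const _).aestronglyMeasurable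
      (Eventually.of_forall fun ω => ?_)
    rw [Real.norm_of_nonneg (by positivity)]
    simp only [Pi.add_apply]
    rcases le_total |Z ω| 1 with h1 | h1
    · have := rpow_le_one (abs_nonneg (Z ω)) h1 (by positivity : 0 ≤ 1 / a)
      nlinarith [sq_nonneg (Z ω)]
    · have := rpow_le_rpow_of_exponent_le h1 hp2
      rw [rpow_two, sq_abs] at this
      linarith
  have hlim_eq : (∫⁻ ω, ENNReal.ofReal (|Z ω| ^ (1 / a)) ∂(ℙ : Measure Ω)).toReal
      = ∫ ω, |Z ω| ^ (1 / a) ∂(ℙ : Measure Ω) := by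
    rw [integral_eq_lintegral_of_nonneg_ae (Eventually.of_forall fun ω => by positivity)
      hint.1]
  have hreal := (ENNReal.tendsto_toReal hint.lintegral_lt_top.ne).comp hcore
  rw [hlim_eq] at hreal
  have hδ : Tendsto (fun ε : ℝ => (ε / c₂) ^ (1 / a)) (𝓝[>] 0) (𝓝[>] 0) := by
    refine tendsto_nhdsWithin_iff.2 ⟨?_, ?_⟩
    · have hc : Continuous (fun ε : ℝ => (ε / c₂) ^ (1 / a)) :=
        (continuous_id.div_const c₂).rpow_const fun _ => Or.inr (by positivity)
      have := hc.tendsto 0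
      simp only [zero_div, zero_rpow (by positivity : (1 / a) ≠ 0)] at this
      exact this.mono_left nhdsWithin_le_nhds
    · filter_upwards [self_mem_nhdsWithin] with ε hε
      have hε : 0 < ε := hε
      exact rpow_pos_of_pos (by positivity) _
  refine Tendsto.congr' ?_ ((hreal.comp hδ).const_mul (c₂ ^ (1 / a)))
  filter_upwards [self_mem_nhdsWithin] with ε hε
  have hε : 0 < ε := hε
  simp only [Function.comp_apply]
  rw [ENNReal.toReal_mul, ENNReal.toReal_ofReal (by positivity),
    ENNReal.tsum_toReal_eq (fun _ => measure_ne_top _ _), ← mul_assoc,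
    ← mul_rpow hc₂.le (by positivity), mul_div_cancel₀ _ hc₂.ne']
  congr 1
  refine tsum_congr fun n => ?_
  congr 2
  ext ω
  have hn : (0 : ℝ) < (n : ℝ) + 1 := by positivity
  have hna : 0 < ((n : ℝ) + 1) ^ a := rpow_pos_of_pos hn a
  simp only [Set.mem_setOf_eq, hXdef]
  rw [mul_rpow (by positivity) hn.le, ← rpow_mul (by positivity), one_div_mul_cancel ha0.ne',
    rpow_one, abs_div, abs_of_pos (by push_cast; positivity : 0 < c₂ * ((n + 1 : ℕ) : ℝ) ^ a),
    lt_div_iff₀ (by push_cast; positivity), rpow_add hn]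
  push_cast
  have e : ε / c₂ * ((n : ℝ) + 1) ^ a * (c₂ * ((n : ℝ) + 1) ^ a)
      = ε * (((n : ℝ) + 1) ^ a * ((n : ℝ) + 1) ^ a) := by
    field_simp
  rw [e]
end

section
/- Let H ∈ (0,1) and let (B_t)_{t≥0} be a fractional Brownian motion with Hurst parameter H. Then (1/(−log ε)) · Σ_{n≥1} (1/n) · P(|B_n| > ε n^{2H}) converges to 1/H as ε → 0⁺. -/
open MeasureTheory ProbabilityTheory Filter Real Topology

lemma aux_telescope (s : ℝ) (hs : 0 < s) (a : ℝ) (ha : 0 < a) :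
    (a + 1) ^ (-1 - s) ≤ (1 / s) * (a ^ (-s) - (a + 1) ^ (-s)) := by
  have hb : 0 < a + 1 := by linarith
  have h1 : a ^ (-s) = (a + 1) ^ (-s) * ((a + 1) / a) ^ s := by
    rw [Real.div_rpow hb.le ha.le, Real.rpow_neg hb.le, Real.rpow_neg ha.le]
    have := Real.rpow_pos_of_pos hb s
    field_simp
  have h2 : 1 + s * (a + 1)⁻¹ ≤ ((a + 1) / a) ^ s := by
    rw [Real.rpow_def_of_pos (by positivity)]
    have h3 := Real.one_sub_inv_le_log_of_pos (x := (a + 1) / a) (by positivity)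
    have h4 := Real.add_one_le_exp (Real.log ((a + 1) / a) * s)
    have h5 : 1 - ((a + 1) / a)⁻¹ = (a + 1)⁻¹ := by field_simp; ring
    rw [h5] at h3
    nlinarith
  have h6 : (a + 1) ^ (-1 - s) = (a + 1) ^ (-s) * (a + 1)⁻¹ := by
    rw [← Real.rpow_neg_one (a + 1), ← Real.rpow_add hb]; ring_nf
  have hp := Real.rpow_pos_of_pos hb (-s)
  rw [h1, h6, one_div, inv_mul_eq_div, le_div_iff₀ hs]
  nlinarith

lemma aux_tail (s : ℝ) (hs : 0 < s) (a : ℝ) (ha : 0 < a) (K : ℕ) :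
    ∑ n ∈ Finset.range K, (a + n + 1) ^ (-1 - s) ≤ (1 / s) * (a ^ (-s) - (a + K) ^ (-s)) := by
  induction K with
  | zero => simp
  | succ k ih =>
    rw [Finset.sum_range_succ]
    have := aux_telescope s hs (a + k) (by positivity)
    push_cast
    rw [← add_assoc]
    nlinarith

lemma aux_harm (n : ℕ) :
    ((harmonic n : ℚ) : ℝ) = ∑ i ∈ Finset.range n, 1 / ((i : ℝ) + 1) := by
  simp [harmonic]


lemma aux_upper (H : ℝ) (hH : 0 < H) (G : ℝ → ℝ) (h0 : ∀ x, 0 ≤ G x)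
    (h1 : ∀ x, G x ≤ 1) (h2 : ∀ x, 0 < x → G x ≤ (x ^ 2)⁻¹) (ε : ℝ) (he : 0 < ε) (he1 : ε < 1) :
    Summable (fun n : ℕ => (1 / ((n : ℝ) + 1)) * G (ε * ((n : ℝ) + 1) ^ H)) ∧
    ∑' n : ℕ, (1 / ((n : ℝ) + 1)) * G (ε * ((n : ℝ) + 1) ^ H)
      ≤ (1 + Real.log 2 + 1 / (2 * H)) + (-Real.log ε) / H := by
  set f := fun n : ℕ => (1 / ((n : ℝ) + 1)) * G (ε * ((n : ℝ) + 1) ^ H) with hf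
  have hf0 : ∀ n, 0 ≤ f n := fun n => mul_nonneg (by positivity) (h0 _)
  set N : ℝ := ε ^ (-(1 / H)) with hN
  have hN1 : 1 ≤ N := Real.one_le_rpow_of_pos_of_le_one_of_nonpos he he1.le (by
    have : 0 < 1 / H := by positivity
    linarith)
  set M := ⌈N⌉₊ with hM
  have hNM : N ≤ M := Nat.le_ceil N
  have hMN : (M : ℝ) ≤ 2 * N := by
    have := Nat.ceil_lt_add_one (a := N) (by linarith)
    linarith
  have hMpos : (0 : ℝ) < M := by linarith
  have tail : ∀ K, ∑ n ∈ Finset.range K, f (n + M) ≤ 1 / (2 * H) := by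
    intro K
    have hb : ∀ n ∈ Finset.range K, f (n + M) ≤ (ε ^ 2)⁻¹ * ((M : ℝ) + n + 1) ^ (-1 - 2 * H) := by
      intro n _
      have hx : (0 : ℝ) < (M : ℝ) + n + 1 := by positivity
      have e1 : (((n + M : ℕ) : ℝ) + 1) = (M : ℝ) + n + 1 := by push_cast; ring
      have : f (n + M) = 1 / ((M : ℝ) + n + 1) * G (ε * ((M : ℝ) + n + 1) ^ H) := by
        simp only [hf, e1]
      rw [this]
      have h3 := h2 (ε * ((M : ℝ) + n + 1) ^ H) (by positivity)
      have e2 : ((M : ℝ) + n + 1) ^ (-1 - 2 * H)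
          = 1 / ((M : ℝ) + n + 1) * ((((M : ℝ) + n + 1) ^ H) ^ 2)⁻¹ := by
        rw [← Real.rpow_natCast, ← Real.rpow_mul hx.le, ← Real.rpow_neg hx.le, one_div,
          ← Real.rpow_neg_one, ← Real.rpow_add hx]
        congr 1; push_cast; ring
      rw [e2]
      calc _ ≤ 1 / ((M : ℝ) + n + 1) * ((ε * ((M : ℝ) + n + 1) ^ H) ^ 2)⁻¹ := by gcongr
        _ = _ := by rw [mul_pow, mul_inv]; ring
    refine (Finset.sum_le_sum hb).trans ?_
    rw [← Finset.mul_sum]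
    have h3 := aux_tail (2 * H) (by positivity) M hMpos K
    have h4 : (M : ℝ) ^ (-(2 * H)) ≤ ε ^ 2 := by
      calc (M : ℝ) ^ (-(2 * H)) ≤ N ^ (-(2 * H)) :=
            Real.rpow_le_rpow_of_nonpos (by linarith) hNM (by linarith)
        _ = ε ^ (2 : ℝ) := by
            rw [hN, ← Real.rpow_mul he.le]; congr 1; field_simp
        _ = ε ^ 2 := by norm_num
    have h5 : 0 ≤ ((M : ℝ) + K) ^ (-(2 * H)) := by positivity
    have h6 : ∑ n ∈ Finset.range K, ((M : ℝ) + n + 1) ^ (-1 - 2 * H) ≤ 1 / (2 * H) * ε ^ 2 :=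
      h3.trans (mul_le_mul_of_nonneg_left (by linarith) (by positivity))
    calc _ ≤ (ε ^ 2)⁻¹ * (1 / (2 * H) * ε ^ 2) := by gcongr
      _ = _ := by field_simp
  have hs' : Summable (fun n => f (n + M)) :=
    summable_of_sum_range_le (fun n => hf0 _) tail
  have hs : Summable f := (summable_nat_add_iff M).1 hs'
  refine ⟨hs, ?_⟩
  rw [← hs.sum_add_tsum_nat_add M]
  have ht := Real.tsum_le_of_sum_range_le (fun n => hf0 (n + M)) tail
  have hh : ∑ n ∈ Finset.range M, f n ≤ 1 + Real.log M := by
    refine le_trans ?_ (harmonic_le_one_add_log M)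
    rw [aux_harm]
    refine Finset.sum_le_sum fun n _ => ?_
    exact mul_le_of_le_one_right (by positivity) (h1 _)
  have hl : Real.log M ≤ Real.log 2 + (-Real.log ε) / H := by
    calc Real.log M ≤ Real.log (2 * N) := Real.log_le_log hMpos hMN
      _ = _ := by
        rw [Real.log_mul (by norm_num) (by linarith), hN, Real.log_rpow he]; ring
  linarith

lemma aux_lower (H : ℝ) (hH : 0 < H) (G : ℝ → ℝ) (hanti : Antitone G) (h0 : ∀ x, 0 ≤ G x)
    (ε δ : ℝ) (he : 0 < ε) (hd : 0 < δ)
    (hs : Summable (fun n : ℕ => (1 / ((n : ℝ) + 1)) * G (ε * ((n : ℝ) + 1) ^ H))) :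
    G δ * ((Real.log δ - Real.log ε) / H) ≤
    ∑' n : ℕ, (1 / ((n : ℝ) + 1)) * G (ε * ((n : ℝ) + 1) ^ H) := by
  set N : ℝ := (δ / ε) ^ (1 / H) with hN
  have hN0 : 0 < N := by positivity
  set M := ⌊N⌋₊ with hM
  have hMN : (M : ℝ) ≤ N := Nat.floor_le hN0.le
  have hl : (Real.log δ - Real.log ε) / H ≤ ∑ i ∈ Finset.range M, 1 / ((i : ℝ) + 1) := by
    rw [← aux_harm]
    refine le_trans ?_ (log_add_one_le_harmonic M)
    have : (Real.log δ - Real.log ε) / H = Real.log N := by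
      rw [hN, Real.log_rpow (by positivity), Real.log_div hd.ne' he.ne']; ring
    rw [this]
    apply Real.log_le_log hN0
    push_cast
    exact (Nat.lt_floor_add_one N).le
  refine le_trans ?_ (hs.sum_le_tsum (Finset.range M) fun n _ => mul_nonneg (by positivity) (h0 _))
  refine (mul_le_mul_of_nonneg_left hl (h0 _)).trans ?_
  rw [Finset.mul_sum]
  refine Finset.sum_le_sum fun n hn => ?_
  rw [mul_comm]
  refine mul_le_mul_of_nonneg_left (hanti ?_) (by positivity)
  have hn' : ((n : ℝ) + 1) ≤ N := by
    have : n + 1 ≤ M := Finset.mem_range.1 hn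
    have : ((n : ℝ) + 1) ≤ M := by exact_mod_cast this
    linarith
  calc ε * ((n : ℝ) + 1) ^ H ≤ ε * N ^ H := by gcongr
    _ = δ := by
      rw [hN, ← Real.rpow_mul (by positivity), one_div_mul_cancel hH.ne', Real.rpow_one]
      field_simp


lemma aux_main (H : ℝ) (hH : 0 < H) (G : ℝ → ℝ) (hanti : Antitone G) (h0 : ∀ x, 0 ≤ G x)
    (h1 : ∀ x, G x ≤ 1) (h2 : ∀ x, 0 < x → G x ≤ (x ^ 2)⁻¹)
    (hlim : Tendsto G (𝓝[>] 0) (𝓝 1)) :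
    Tendsto (fun ε : ℝ => (1 / (-Real.log ε)) *
      ∑' n : ℕ, (1 / ((n : ℝ) + 1)) * G (ε * ((n : ℝ) + 1) ^ H)) (𝓝[>] 0) (𝓝 (1 / H)) := by
  have hL : Tendsto (fun ε : ℝ => -Real.log ε) (𝓝[>] 0) atTop :=
    tendsto_neg_atBot_atTop.comp Real.tendsto_log_nhdsGT_zero
  have hlow : Tendsto (fun L : ℝ => G (L⁻¹) * ((1 - Real.log L / L) / H)) atTop (𝓝 (1 / H)) := by
    have a1 := hlim.comp tendsto_inv_atTop_nhdsGT_zero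
    have a2 := Real.isLittleO_log_id_atTop.tendsto_div_nhds_zero
    have := a1.mul (((tendsto_const_nhds (x := (1 : ℝ))).sub a2).div_const H)
    simpa using this
  have hup : Tendsto (fun L : ℝ => (1 + Real.log 2 + 1 / (2 * H)) / L + 1 / H) atTop
      (𝓝 (1 / H)) := by
    have := (tendsto_const_nhds (x := (1 + Real.log 2 + 1 / (2 * H)))).div_atTop
      (tendsto_id (α := ℝ) (x := atTop))
    simpa using this.add_const (1 / H)
  have hev : ∀ᶠ ε : ℝ in 𝓝[>] 0, 0 < ε ∧ ε < 1 := by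
    filter_upwards [Ioo_mem_nhdsGT (show (0 : ℝ) < 1 by norm_num)] with ε h using h
  refine tendsto_of_tendsto_of_tendsto_of_le_of_le' (hlow.comp hL) (hup.comp hL) ?_ ?_
  · filter_upwards [hev] with ε ⟨he, he1⟩
    have hLp : 0 < -Real.log ε := by have := Real.log_neg he he1; linarith
    have := aux_lower H hH G hanti h0 ε (-Real.log ε)⁻¹ he (by positivity)
      (aux_upper H hH G h0 h1 h2 ε he he1).1
    simp only [Function.comp]
    have h3 := mul_le_mul_of_nonneg_left this (show 0 ≤ 1 / (-Real.log ε) by positivity)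
    refine le_trans (le_of_eq ?_) h3
    rw [Real.log_inv]
    generalize Real.log (-Real.log ε) = z
    generalize G _ = g
    generalize Real.log ε = l at *
    have : l ≠ 0 := by intro h; simp [h] at hLp
    field_simp
    ring
  · filter_upwards [hev] with ε ⟨he, he1⟩
    have hLp : 0 < -Real.log ε := by have := Real.log_neg he he1; linarith
    have := (aux_upper H hH G h0 h1 h2 ε he he1).2
    simp only [Function.comp]
    have h3 := mul_le_mul_of_nonneg_left this (show 0 ≤ 1 / (-Real.log ε) by positivity)
    refine le_trans h3 (le_of_eq ?_)
    generalize Real.log ε = l at *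
    have : l ≠ 0 := by intro h; simp [h] at hLp
    field_simp
    ring

noncomputable def auxG (x : ℝ) : ℝ := (gaussianReal 0 1 {y : ℝ | x < |y|}).toReal

lemma auxG_anti : Antitone auxG := by
  intro x y h
  apply ENNReal.toReal_mono (measure_ne_top _ _)
  exact measure_mono fun z hz => lt_of_le_of_lt h hz

lemma auxG_le_one (x : ℝ) : auxG x ≤ 1 := measureReal_le_one

lemma auxG_le (x : ℝ) (hx : 0 < x) : auxG x ≤ (x ^ 2)⁻¹ := by
  have h := meas_ge_le_variance_div_sq (μ := gaussianReal 0 1) (X := id)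
    (memLp_id_gaussianReal 2) hx
  simp only [variance_id_gaussianReal, id, integral_id_gaussianReal, sub_zero] at h
  refine ENNReal.toReal_le_of_le_ofReal (by positivity) ?_
  refine le_trans (measure_mono ?_) (h.trans (le_of_eq ?_))
  · intro z hz
    exact le_of_lt (show x < |z| from hz)
  simp

lemma auxG_lim : Tendsto auxG (𝓝[>] 0) (𝓝 1) := by
  have hm : ∀ r : ℝ, MeasurableSet {y : ℝ | |y| ≤ r} := fun r =>
    measurableSet_le (by fun_prop) measurable_const
  have h := tendsto_measure_biInter_gt (μ := gaussianReal 0 1) (s := fun r : ℝ => {y : ℝ | |y| ≤ r})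
    (a := 0) (fun r _ => (hm r).nullMeasurableSet) (fun i j _ hij z hz => le_trans hz hij)
    ⟨1, one_pos, measure_ne_top _ _⟩
  have hi : (⋂ r > (0 : ℝ), {y : ℝ | |y| ≤ r}) = {0} := by
    ext z
    simp only [Set.mem_iInter, Set.mem_ofPred_eq, Set.mem_singleton_iff]
    constructor
    · intro hz
      exact abs_nonpos_iff.1 (le_of_forall_gt_imp_ge_of_dense hz)
    · rintro rfl r hr
      simpa using hr.le
  have := nullSingletonClass_gaussianReal (μ := 0) (v := 1) one_ne_zero
  rw [hi, measure_singleton] at h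
  have h' := (ENNReal.tendsto_toReal ENNReal.zero_ne_top).comp h
  have h3 := (tendsto_const_nhds (x := (1 : ℝ))).sub h'
  simp only [ENNReal.toReal_zero, sub_zero] at h3
  refine h3.congr fun r => ?_
  have e : {y : ℝ | r < |y|} = {y : ℝ | |y| ≤ r}ᶜ := by ext; simp
  have := probReal_compl_eq_one_sub (μ := gaussianReal 0 1) (hm r)
  rw [← e] at this
  exact this.symm

lemma aux_law {Ω : Type*} [MeasureSpace Ω] [IsProbabilityMeasure (ℙ : Measure Ω)]
    (H : ℝ) (hH0 : 0 < H)
    (B : ℝ → Ω → ℝ) (hB : IsFractionalBrownianMotion B H) (t : ℝ) (ht : 0 < t) (ε : ℝ) :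
    (ℙ {ω | ε * t ^ (2 * H) < |B t ω|}).toReal = auxG (ε * t ^ H) := by
  obtain ⟨v, hv⟩ := hB.gaussian_fdd 1 (fun _ => t) (fun _ => ht.le) (fun _ => 1)
  simp only [Finset.univ_unique, Finset.sum_const, Finset.card_singleton, one_smul, one_mul] at hv
  have hm := hB.measurable t
  have hc := hB.covariance t t ht.le ht.le
  rw [sub_self, abs_zero, Real.zero_rpow (by positivity)] at hc
  have hvar : (v : ℝ) = t ^ (2 * H) := by
    have e1 : Var[id; gaussianReal 0 v] = v := variance_id_gaussianReal
    rw [variance_eq_integral measurable_id.aemeasurable] at e1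
    simp only [id, integral_id_gaussianReal, sub_zero] at e1
    rw [← e1, ← hv, integral_map hm.aemeasurable (by fun_prop)]
    rw [show (fun ω => B t ω ^ 2) = fun ω => B t ω * B t ω by ext; ring, hc]
    ring
  have hpos : 0 < t ^ H := Real.rpow_pos_of_pos ht H
  have e2 : t ^ (2 * H) = t ^ H * t ^ H := by rw [← Real.rpow_add ht]; ring_nf
  have hmap := gaussianReal_map_const_mul (μ := 0) (v := 1) (t ^ H)
  have hS : MeasurableSet {y : ℝ | ε * t ^ (2 * H) < |y|} :=
    measurableSet_lt measurable_const (by fun_prop)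
  have e3 : gaussianReal 0 v = (gaussianReal 0 1).map (t ^ H * ·) := by
    rw [hmap, mul_zero]
    congr 1
    ext
    simp [hvar, e2, sq]
  have e4 : ℙ {ω | ε * t ^ (2 * H) < |B t ω|} = (ℙ : Measure Ω).map (B t)
      {y : ℝ | ε * t ^ (2 * H) < |y|} := by
    rw [Measure.map_apply hm hS]; rfl
  rw [e4, hv, e3, Measure.map_apply (by fun_prop) hS, auxG]
  congr 2
  ext y
  simp only [Set.mem_preimage, Set.mem_ofPred_eq, abs_mul, abs_of_pos hpos, e2]
  rw [show ε * (t ^ H * t ^ H) = t ^ H * (ε * t ^ H) by ring]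
  exact mul_lt_mul_iff_right₀ hpos

theorem stmt_14 {Ω : Type*} [MeasureSpace Ω] [IsProbabilityMeasure (ℙ : Measure Ω)]
    (H : ℝ) (hH0 : 0 < H) (hH1 : H < 1)
    (B : ℝ → Ω → ℝ) (hB : IsFractionalBrownianMotion B H) :
    Tendsto
      (fun ε : ℝ =>
        (1 / (-Real.log ε)) *
          ∑' n : ℕ, (1 / ((n : ℝ) + 1)) *
            (ℙ {ω | ε * ((n : ℝ) + 1) ^ (2 * H) < |B ((n : ℝ) + 1) ω|}).toReal)
      (𝓝[>] 0) (𝓝 (1 / H)) := by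
  have h := aux_main H hH0 auxG auxG_anti (fun _ => ENNReal.toReal_nonneg) auxG_le_one auxG_le
    auxG_lim
  refine h.congr fun ε => ?_
  congr 1
  refine tsum_congr fun n => ?_
  rw [aux_law H hH0 B hB ((n : ℝ) + 1) (by positivity) ε]
end
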